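/- arXiv:1902.03641 — 2 statements merged into one kernel-verified Lean document; each statement's English description precedes it below -/
import Mathlib

section
/- Let K be any field, let E be a finite graph, let v ∈ E^0 be a regular vertex which is not the base of a loop, and let G be the collapse-at-v graph. Then L_K(E) is Morita equivalent to L_K(G). -/
/-!
Write `G` for the collapsed graph and `p = 1 - v` in `L_K(E)`, the sum of the vertices other than
`v`. The elements `u` (`u ≠ v`), the edges away from `v`, and the products `e f` of an edge `e` into
`v` with an edge `f` out of `v` form a Leavitt `G`-family in `L_K(E)` with unit `p`
(`LeavittFamily.collapse`). Hence `M ↦ p M` is a functor `collapseFunctor` from `L_K(E)`-modules to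
`L_K(G)`-modules, and this functor is shown to be an equivalence.

Fully faithful: as `v` is regular and carries no loop, `v = ∑ f f* = ∑ f p f*` over the edges `f`
leaving `v`, so every `m` equals `p m + ∑ f p f* m` (`fIncl_fProj_add`). A homomorphism is thus
determined by its restriction to `p M`, and any `h : p M → p M₂` extends by
`m ↦ h (p m) + ∑ f h (p f* m)` (`extendHom`). Linearity of the extension is checked on the generators
of `L_K(E)`.

Essentially surjective: an `L_K(G)`-module `N` induces a Leavitt `E`-family on `N × N ^ {f}`
(`LeavittFamily.ext`), where the edges `f` out of `v` move `N` into the coordinate `f`, and an edge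
`e` into `v` maps coordinate `f` back to `N` by `[ef]`. On the resulting `L_K(E)`-module, `p` is the
projection to `N`, and the `L_K(G)`-action on `N` is the original one (`toExtEquiv`).

Working with modules throughout avoids having to show that `L_K(G)` embeds in `L_K(E)`.
-/

/-! ## Finite directed graphs -/

structure FinGraph where
  V : Type
  E : Type
  [fintypeV : Fintype V]
  [fintypeE : Fintype E]
  [decEqV : DecidableEq V]
  [decEqE : DecidableEq E]
  s : E → V
  r : E → V

attribute [instance] FinGraph.fintypeV FinGraph.fintypeE FinGraph.decEqV FinGraph.decEqE

namespace FinGraph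

/-- A vertex is regular if it emits at least one edge. -/
def IsRegular (G : FinGraph) (v : G.V) : Prop := ∃ e : G.E, G.s e = v

/-- A sink emits no edges. -/
def IsSink (G : FinGraph) (v : G.V) : Prop := ∀ e : G.E, G.s e ≠ v

/-- A source receives no edges. -/
def IsSource (G : FinGraph) (v : G.V) : Prop := ∀ e : G.E, G.r e ≠ v

/-- A graph is totally looped if every regular vertex is the base of a loop. -/
def TotallyLooped (G : FinGraph) : Prop :=
  ∀ v : G.V, G.IsRegular v → ∃ e : G.E, G.s e = v ∧ G.r e = v

/-- A set of vertices is hereditary if it is closed under ranges of edges emitted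
from its elements (equivalently, under reachability by paths). -/
def Hereditary (G : FinGraph) (T : Finset G.V) : Prop :=
  ∀ e : G.E, G.s e ∈ T → G.r e ∈ T

/-- A set of vertices `H` is saturated if every regular vertex all of whose emitted
edges end in `H` belongs to `H`. -/
def Saturated (G : FinGraph) (H : Set G.V) : Prop :=
  ∀ v : G.V, G.IsRegular v → (∀ e : G.E, G.s e = v → G.r e ∈ H) → v ∈ H

/-- The trivial graph: one vertex, no edges. -/
def IsTrivial (G : FinGraph) : Prop :=
  Nonempty G.V ∧ Subsingleton G.V ∧ IsEmpty G.E

/-- A graph is source-free if every vertex receives at least one edge. -/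
def IsSourceFree (G : FinGraph) : Prop := ∀ v : G.V, ∃ e : G.E, G.r e = v

/-- The graph with `k` vertices and no edges. -/
def discrete (k : ℕ) : FinGraph where
  V := Fin k
  E := Empty
  s := Empty.elim
  r := Empty.elim

/-- The straight line graph `A_n` with `n` vertices `v_0, …, v_{n-1}` and
edges `v_{i+1} → v_i` for `0 ≤ i ≤ n-2`. -/
def line (n : ℕ) : FinGraph where
  V := Fin n
  E := Fin (n - 1)
  s := fun i => ⟨i.1 + 1, by have := i.isLt; omega⟩
  r := fun i => ⟨i.1, by have := i.isLt; omega⟩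

/-- Disjoint union of two graphs. -/
def disjUnion (G H : FinGraph) : FinGraph where
  V := G.V ⊕ H.V
  E := G.E ⊕ H.E
  s := Sum.map G.s H.s
  r := Sum.map G.r H.r

/-- The restriction graph of `G` to a hereditary set `T` of vertices. -/
def restrict (G : FinGraph) (T : Finset G.V) (hT : G.Hereditary T) : FinGraph where
  V := {v : G.V // v ∈ T}
  E := {e : G.E // G.s e ∈ T}
  s := fun e => ⟨G.s e.1, e.2⟩
  r := fun e => ⟨G.r e.1, hT e.1 e.2⟩

/-- The "strands of hair" extension `F⁺(n)` of `F`:  at each vertex `v` a strand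
`v^{n v - 1} → ⋯ → v^1 → v` of length `n v - 1` is attached. -/
def hairExtension (F : FinGraph) (n : F.V → ℕ) : FinGraph where
  V := F.V ⊕ (Σ v : F.V, Fin (n v - 1))
  E := F.E ⊕ (Σ v : F.V, Fin (n v - 1))
  s := Sum.elim (fun e => Sum.inl (F.s e)) (fun p => Sum.inr p)
  r := Sum.elim (fun e => Sum.inl (F.r e))
    (fun p => if h : (p.2 : ℕ) = 0 then Sum.inl p.1
      else Sum.inr ⟨p.1, ⟨(p.2 : ℕ) - 1, by have := p.2.isLt; omega⟩⟩)

/-- The "Move (R)" graph at a vertex `w` which emits precisely one edge `f`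
which is not a loop: `w` is removed, and each edge `e` into `w` is replaced by
an edge `[ef]` from `s e` to `r f`. -/
def moveR (E : FinGraph) (w : E.V) (f : E.E)
    (hsf : E.s f = w) (huniq : ∀ e : E.E, E.s e = w → e = f) (hnl : E.r f ≠ w) : FinGraph where
  V := {v : E.V // v ≠ w}
  E := {e : E.E // E.r e ≠ w ∧ e ≠ f} ⊕ {e : E.E // E.r e = w}
  s := Sum.elim
    (fun e => ⟨E.s e.1, fun h => e.2.2 (huniq e.1 h)⟩)
    (fun e => ⟨E.s e.1, fun h => hnl ((huniq e.1 h) ▸ e.2)⟩)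
  r := Sum.elim
    (fun e => ⟨E.r e.1, e.2.1⟩)
    (fun _ => ⟨E.r f, hnl⟩)

/-- The collapse of `E` at a vertex `v` which is not the base of a loop:
`v` is removed, and for every `e ∈ r⁻¹(v)` and `f ∈ s⁻¹(v)` an edge `[ef]`
from `s e` to `r f` is added. -/
def collapse (E : FinGraph) (v : E.V)
    (hnl : ∀ e : E.E, E.s e = v → E.r e ≠ v) : FinGraph where
  V := {u : E.V // u ≠ v}
  E := {e : E.E // E.r e ≠ v ∧ E.s e ≠ v} ⊕ ({e : E.E // E.r e = v} × {f : E.E // E.s f = v})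
  s := Sum.elim
    (fun e => ⟨E.s e.1, e.2.2⟩)
    (fun p => ⟨E.s p.1.1, fun h => (hnl p.1.1 h) p.1.2⟩)
  r := Sum.elim
    (fun e => ⟨E.r e.1, e.2.1⟩)
    (fun p => ⟨E.r p.2.1, hnl p.2.1 p.2.2⟩)

/-- The in-split graph of `E` at a vertex `v`, with respect to a partition of
`r⁻¹(v)` into `n` classes (encoded as a surjection `P : r⁻¹(v) → Fin n`). -/
def inSplit (E : FinGraph) (v : E.V) (n : ℕ) (P : {e : E.E // E.r e = v} → Fin n) : FinGraph where
  V := {u : E.V // u ≠ v} ⊕ Fin n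
  E := ({e : E.E // E.s e = v} × Fin n) ⊕ {f : E.E // E.s f ≠ v}
  s := Sum.elim (fun x => Sum.inr x.2) (fun f => Sum.inl ⟨E.s f.1, f.2⟩)
  r := Sum.elim
    (fun x => if h : E.r x.1.1 = v then Sum.inr (P ⟨x.1.1, h⟩) else Sum.inl ⟨E.r x.1.1, h⟩)
    (fun f => if h : E.r f.1 = v then Sum.inr (P ⟨f.1, h⟩) else Sum.inl ⟨E.r f.1, h⟩)

/-- The out-split graph of `E` at a vertex `v`, with respect to a partition of
`s⁻¹(v)` into `n` classes (encoded as a surjection `P : s⁻¹(v) → Fin n`). -/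
def outSplit (E : FinGraph) (v : E.V) (n : ℕ) (P : {e : E.E // E.s e = v} → Fin n) : FinGraph where
  V := {u : E.V // u ≠ v} ⊕ Fin n
  E := ({e : E.E // E.r e = v} × Fin n) ⊕ {f : E.E // E.r f ≠ v}
  r := Sum.elim (fun x => Sum.inr x.2) (fun f => Sum.inl ⟨E.r f.1, f.2⟩)
  s := Sum.elim
    (fun x => if h : E.s x.1.1 = v then Sum.inr (P ⟨x.1.1, h⟩) else Sum.inl ⟨E.s x.1.1, h⟩)
    (fun f => if h : E.s f.1 = v then Sum.inr (P ⟨f.1, h⟩) else Sum.inl ⟨E.s f.1, h⟩)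

/-- The source elimination graph `E \ v` at a source `v`. -/
def sourceElim (E : FinGraph) (v : E.V) (hsrc : E.IsSource v) : FinGraph where
  V := {u : E.V // u ≠ v}
  E := {e : E.E // E.s e ≠ v}
  s := fun e => ⟨E.s e.1, e.2⟩
  r := fun e => ⟨E.r e.1, fun h => hsrc e.1 h⟩

/-- A chain of source eliminations starting at `E`. -/
inductive ElimChain (E : FinGraph) : FinGraph → Type 1
  | refl : ElimChain E E
  | step {H : FinGraph} (c : ElimChain E H) (v : H.V) (hsrc : H.IsSource v) :
      ElimChain E (H.sourceElim v hsrc)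

/-- The canonical (injective) map from the vertices of the final graph of a
source elimination chain back into the vertices of the initial graph. -/
def ElimChain.vmap {E : FinGraph} : {F : FinGraph} → ElimChain E F → F.V → E.V
  | _, .refl, u => u
  | _, .step c _ _, u => c.vmap u.1

/-- A chain of collapses, each performed at a regular vertex which is not the
base of a loop. -/
inductive CollapseChain (E : FinGraph) : FinGraph → Prop
  | refl : CollapseChain E E
  | step {H : FinGraph} (c : CollapseChain E H) (v : H.V) (hreg : H.IsRegular v)
      (hnl : ∀ e : H.E, H.s e = v → H.r e ≠ v) :
      CollapseChain E (H.collapse v hnl)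

end FinGraph

/-! ## Leavitt path algebras -/

/-- Generators of the Leavitt path algebra: vertices, edges, and ghost edges. -/
inductive LPAGen (G : FinGraph) : Type
  | vert : G.V → LPAGen G
  | edge : G.E → LPAGen G
  | ghost : G.E → LPAGen G

/-- The defining relations of the Leavitt path algebra of a finite graph. -/
inductive LeavittRel (K : Type) [Field K] (G : FinGraph) :
    FreeAlgebra K (LPAGen G) → FreeAlgebra K (LPAGen G) → Prop
  | vertMul (v w : G.V) :
      LeavittRel K G (FreeAlgebra.ι K (LPAGen.vert v) * FreeAlgebra.ι K (LPAGen.vert w))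
        (if v = w then FreeAlgebra.ι K (LPAGen.vert v) else 0)
  | edgeLeft (e : G.E) :
      LeavittRel K G (FreeAlgebra.ι K (LPAGen.vert (G.s e)) * FreeAlgebra.ι K (LPAGen.edge e))
        (FreeAlgebra.ι K (LPAGen.edge e))
  | edgeRight (e : G.E) :
      LeavittRel K G (FreeAlgebra.ι K (LPAGen.edge e) * FreeAlgebra.ι K (LPAGen.vert (G.r e)))
        (FreeAlgebra.ι K (LPAGen.edge e))
  | ghostLeft (e : G.E) :
      LeavittRel K G (FreeAlgebra.ι K (LPAGen.vert (G.r e)) * FreeAlgebra.ι K (LPAGen.ghost e))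
        (FreeAlgebra.ι K (LPAGen.ghost e))
  | ghostRight (e : G.E) :
      LeavittRel K G (FreeAlgebra.ι K (LPAGen.ghost e) * FreeAlgebra.ι K (LPAGen.vert (G.s e)))
        (FreeAlgebra.ι K (LPAGen.ghost e))
  | ghostEdge (e f : G.E) :
      LeavittRel K G (FreeAlgebra.ι K (LPAGen.ghost e) * FreeAlgebra.ι K (LPAGen.edge f))
        (if e = f then FreeAlgebra.ι K (LPAGen.vert (G.r e)) else 0)
  | cuntzKrieger (v : G.V) (hv : G.IsRegular v) :
      LeavittRel K G (FreeAlgebra.ι K (LPAGen.vert v))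
        (∑ e ∈ Finset.univ.filter (fun e : G.E => G.s e = v),
          FreeAlgebra.ι K (LPAGen.edge e) * FreeAlgebra.ι K (LPAGen.ghost e))
  | unit :
      LeavittRel K G 1 (∑ v : G.V, FreeAlgebra.ι K (LPAGen.vert v))

/-- The Leavitt path algebra `L_K(G)` of a finite graph `G` with coefficients in
a field `K`. -/
abbrev LeavittPathAlgebra (K : Type) [Field K] (G : FinGraph) : Type :=
  RingQuot (LeavittRel K G)

namespace LeavittPathAlgebra

variable (K : Type) [Field K] (G : FinGraph)

/-- The image of a vertex in the Leavitt path algebra. -/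
def vert (v : G.V) : LeavittPathAlgebra K G :=
  RingQuot.mkAlgHom K (LeavittRel K G) (FreeAlgebra.ι K (LPAGen.vert v))

/-- The image of an edge in the Leavitt path algebra. -/
def edge (e : G.E) : LeavittPathAlgebra K G :=
  RingQuot.mkAlgHom K (LeavittRel K G) (FreeAlgebra.ι K (LPAGen.edge e))

/-- The image of a ghost edge in the Leavitt path algebra. -/
def ghost (e : G.E) : LeavittPathAlgebra K G :=
  RingQuot.mkAlgHom K (LeavittRel K G) (FreeAlgebra.ι K (LPAGen.ghost e))

end LeavittPathAlgebra

/-! ## Ring-theoretic notions -/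

/-- Two unital rings are Morita equivalent if their categories of left modules
are equivalent. -/
def MoritaEquivalent (R S : Type) [Ring R] [Ring S] : Prop :=
  Nonempty (ModuleCat.{0} R ≌ ModuleCat.{0} S)

/-- An idempotent `e` of a ring `R` is full if `R e R = R`, i.e. `1` is a finite
sum of elements of the form `a * e * b`. -/
def IsFullIdempotent {R : Type} [Ring R] (e : R) : Prop :=
  IsIdempotentElem e ∧ ∃ (n : ℕ) (a b : Fin n → R), (∑ i, a i * e * b i) = 1

/-- `S` is isomorphic, as a (nonunital) `K`-algebra, to the corner ring
`ε R ε = {x : R | ε * x * ε = x}` of `R`. -/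
def IsCornerIso (K : Type) [Field K] (S R : Type) [Ring S] [Ring R]
    [Algebra K S] [Algebra K R] (ε : R) : Prop :=
  ∃ φ : S →ₙₐ[K] R, Function.Injective φ ∧ Set.range φ = {x : R | ε * x * ε = x}

/-- A module `Q` is a generator for the category of left `R`-modules iff `R` is
an epimorphic image (equivalently, a direct summand) of a finite direct sum of
copies of `Q`. -/
def IsGenerator (R Q : Type) [Ring R] [AddCommGroup Q] [Module R Q] : Prop :=
  ∃ (n : ℕ) (f : (Fin n → Q) →ₗ[R] R), Function.Surjective f

/-! ### Leavitt families and their corner modules -/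

/-- A Leavitt `G`-family in a ring `A`: elements `vt u`, `ed e`, `gh e` satisfying the defining
relations of the Leavitt path algebra of `G`, except that the `vt u` need not sum to `1`. -/
structure LeavittFamily (G : FinGraph) (A : Type) [Ring A] where
  vt : G.V → A
  ed : G.E → A
  gh : G.E → A
  vt_mul_vt : ∀ u w, vt u * vt w = if u = w then vt u else 0
  vt_mul_ed : ∀ e, vt (G.s e) * ed e = ed e
  ed_mul_vt : ∀ e, ed e * vt (G.r e) = ed e
  vt_mul_gh : ∀ e, vt (G.r e) * gh e = gh e
  gh_mul_vt : ∀ e, gh e * vt (G.s e) = gh e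
  gh_mul_ed : ∀ e f, gh e * ed f = if e = f then vt (G.r e) else 0
  ck : ∀ u, G.IsRegular u → vt u = ∑ e, if G.s e = u then ed e * gh e else 0

namespace LeavittFamily

variable {G : FinGraph} {A : Type} [Ring A] (T : LeavittFamily G A)

theorem vt_self (u : G.V) : T.vt u * T.vt u = T.vt u := by simp [T.vt_mul_vt]

theorem vt_ne {u w : G.V} (h : u ≠ w) : T.vt u * T.vt w = 0 := by simp [T.vt_mul_vt, h]

theorem vt_ed_ne {u : G.V} {e : G.E} (h : u ≠ G.s e) : T.vt u * T.ed e = 0 := by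
  rw [← T.vt_mul_ed, ← mul_assoc, T.vt_ne h, zero_mul]

theorem ed_vt_ne {u : G.V} {e : G.E} (h : G.r e ≠ u) : T.ed e * T.vt u = 0 := by
  rw [← T.ed_mul_vt, mul_assoc, T.vt_ne h, mul_zero]

theorem vt_gh_ne {u : G.V} {e : G.E} (h : u ≠ G.r e) : T.vt u * T.gh e = 0 := by
  rw [← T.vt_mul_gh, ← mul_assoc, T.vt_ne h, zero_mul]

theorem gh_vt_ne {u : G.V} {e : G.E} (h : G.s e ≠ u) : T.gh e * T.vt u = 0 := by
  rw [← T.gh_mul_vt, mul_assoc, T.vt_ne h, mul_zero]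

theorem ed_ed_ne {e f : G.E} (h : G.r e ≠ G.s f) : T.ed e * T.ed f = 0 := by
  rw [← T.ed_mul_vt, mul_assoc, T.vt_ed_ne h, mul_zero]

theorem gh_gh_ne {e f : G.E} (h : G.s e ≠ G.r f) : T.gh e * T.gh f = 0 := by
  rw [← T.gh_mul_vt, mul_assoc, T.vt_gh_ne h, mul_zero]

theorem gh_ed_self (e : G.E) : T.gh e * T.ed e = T.vt (G.r e) := by simp [T.gh_mul_ed]

theorem gh_ed_ne {e f : G.E} (h : e ≠ f) : T.gh e * T.ed f = 0 := by simp [T.gh_mul_ed, h]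

/-- The sum of the vertex idempotents; it acts as an identity on the whole family. -/
def unit : A := ∑ u, T.vt u

theorem unit_mul_vt (u : G.V) : T.unit * T.vt u = T.vt u := by
  simp [unit, Finset.sum_mul, T.vt_mul_vt]

theorem vt_mul_unit (u : G.V) : T.vt u * T.unit = T.vt u := by
  simp [unit, Finset.mul_sum, T.vt_mul_vt]

theorem unit_mul_ed (e : G.E) : T.unit * T.ed e = T.ed e := by
  rw [← T.vt_mul_ed, ← mul_assoc, unit_mul_vt]

theorem unit_mul_gh (e : G.E) : T.unit * T.gh e = T.gh e := by
  rw [← T.vt_mul_gh, ← mul_assoc, unit_mul_vt]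

theorem ed_mul_unit (e : G.E) : T.ed e * T.unit = T.ed e := by
  rw [← T.ed_mul_vt, mul_assoc, vt_mul_unit]

theorem gh_mul_unit (e : G.E) : T.gh e * T.unit = T.gh e := by
  rw [← T.gh_mul_vt, mul_assoc, vt_mul_unit]

theorem unit_mul_unit : T.unit * T.unit = T.unit := by
  conv_lhs => rw [unit, Finset.sum_mul]
  simp only [show ∑ u, T.vt u = T.unit from rfl, vt_mul_unit]

/-- Universal property: a family whose vertices sum to `1` is the image of the generators under a
unique algebra homomorphism out of `L_K(G)`. -/
def lift (K : Type) [Field K] [Algebra K A] (h1 : T.unit = 1) : LeavittPathAlgebra K G →ₐ[K] A :=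
  RingQuot.liftAlgHom K ⟨FreeAlgebra.lift K (fun x => match x with
    | .vert u => T.vt u
    | .edge e => T.ed e
    | .ghost e => T.gh e), by
    intro x y h
    cases h with
    | vertMul u w => simp only [map_mul, FreeAlgebra.lift_ι_apply, T.vt_mul_vt]; split_ifs <;> simp
    | edgeLeft e => simp [T.vt_mul_ed]
    | edgeRight e => simp [T.ed_mul_vt]
    | ghostLeft e => simp [T.vt_mul_gh]
    | ghostRight e => simp [T.gh_mul_vt]
    | ghostEdge e f =>
      simp only [map_mul, FreeAlgebra.lift_ι_apply, T.gh_mul_ed]; split_ifs <;> simp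
    | cuntzKrieger u hu => simp [T.ck u hu, Finset.sum_filter, apply_ite]
    | unit => simp [← h1, LeavittFamily.unit]⟩

section
variable (K : Type) [Field K] [Algebra K A] (h1 : T.unit = 1)

@[simp] theorem lift_vert (u : G.V) :
    T.lift K h1 (LeavittPathAlgebra.vert K G u) = T.vt u := by
  simp [lift, LeavittPathAlgebra.vert]

@[simp] theorem lift_edge (u : G.E) :
    T.lift K h1 (LeavittPathAlgebra.edge K G u) = T.ed u := by
  simp [lift, LeavittPathAlgebra.edge]

@[simp] theorem lift_ghost (u : G.E) :
    T.lift K h1 (LeavittPathAlgebra.ghost K G u) = T.gh u := by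
  simp [lift, LeavittPathAlgebra.ghost]
end

/-- The universal family, formed by the generators of `L_K(G)`. -/
def canon (K : Type) [Field K] (G : FinGraph) : LeavittFamily G (LeavittPathAlgebra K G) where
  vt := LeavittPathAlgebra.vert K G
  ed := LeavittPathAlgebra.edge K G
  gh := LeavittPathAlgebra.ghost K G
  vt_mul_vt u w := by
    have := RingQuot.mkAlgHom_rel K (LeavittRel.vertMul (K := K) u w)
    rw [map_mul] at this
    refine this.trans ?_
    split_ifs <;> simp [LeavittPathAlgebra.vert]
  vt_mul_ed e := (map_mul _ _ _).symm.trans (RingQuot.mkAlgHom_rel K (LeavittRel.edgeLeft e))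
  ed_mul_vt e := (map_mul _ _ _).symm.trans (RingQuot.mkAlgHom_rel K (LeavittRel.edgeRight e))
  vt_mul_gh e := (map_mul _ _ _).symm.trans (RingQuot.mkAlgHom_rel K (LeavittRel.ghostLeft e))
  gh_mul_vt e := (map_mul _ _ _).symm.trans (RingQuot.mkAlgHom_rel K (LeavittRel.ghostRight e))
  gh_mul_ed e f := by
    have := RingQuot.mkAlgHom_rel K (LeavittRel.ghostEdge (K := K) e f)
    rw [map_mul] at this
    refine this.trans ?_
    split_ifs <;> simp [LeavittPathAlgebra.vert]
  ck u hu := by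
    refine (RingQuot.mkAlgHom_rel K (LeavittRel.cuntzKrieger u hu)).trans ?_
    simp [Finset.sum_filter, apply_ite, LeavittPathAlgebra.edge, LeavittPathAlgebra.ghost]

theorem canon_unit (K : Type) [Field K] (G : FinGraph) : (canon K G).unit = 1 := by
  have := RingQuot.mkAlgHom_rel K (LeavittRel.unit (K := K) (G := G))
  rw [map_one, map_sum] at this
  exact this.symm

/-- `L_K(G)` is generated as a `K`-algebra by its vertices, edges and ghost edges. -/
theorem canon_induction {K : Type} [Field K] {G : FinGraph} (P : LeavittPathAlgebra K G → Prop)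
    (hK : ∀ k : K, P (algebraMap K _ k)) (hv : ∀ u, P ((canon K G).vt u))
    (he : ∀ e, P ((canon K G).ed e)) (hg : ∀ e, P ((canon K G).gh e))
    (hadd : ∀ a b, P a → P b → P (a + b)) (hmul : ∀ a b, P a → P b → P (a * b))
    (a : LeavittPathAlgebra K G) : P a := by
  obtain ⟨x, rfl⟩ := RingQuot.mkAlgHom_surjective K (LeavittRel K G) a
  induction x using FreeAlgebra.induction with
  | grade0 k => simpa using hK k
  | grade1 x => cases x with
    | vert u => exact hv u
    | edge e => exact he e
    | ghost e => exact hg e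
  | mul a b ha hb => simpa using hmul _ _ ha hb
  | add a b ha hb => simpa using hadd _ _ ha hb

/-- To check that an additive map is `L_K(G)`-linear it is enough to test scalars from `K` and the
generators. -/
theorem linear_of_gens {K : Type} [Field K] {G : FinGraph} {M N : Type} [AddCommGroup M]
    [AddCommGroup N] [Module (LeavittPathAlgebra K G) M] [Module (LeavittPathAlgebra K G) N]
    (g : M →+ N)
    (hK : ∀ (k : K) m, g (algebraMap K (LeavittPathAlgebra K G) k • m)
      = algebraMap K (LeavittPathAlgebra K G) k • g m)
    (hv : ∀ u m, g ((canon K G).vt u • m) = (canon K G).vt u • g m)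
    (he : ∀ u m, g ((canon K G).ed u • m) = (canon K G).ed u • g m)
    (hg : ∀ u m, g ((canon K G).gh u • m) = (canon K G).gh u • g m)
    (a : LeavittPathAlgebra K G) (m : M) : g (a • m) = a • g m := by
  revert m
  induction a using canon_induction with
  | hK k => exact hK k
  | hv u => exact hv u
  | he u => exact he u
  | hg u => exact hg u
  | hadd a b ha hb => intro m; simp [add_smul, ha, hb]
  | hmul a b ha hb => intro m; simp [mul_smul, ha, hb]

section Corner
variable (K : Type) [Field K] [Algebra K A] (M : Type) [AddCommGroup M] [Module A M] [Module K M]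
  [IsScalarTower K A M]

/-- The corner `p M = {m | p m = m}` of a module, where `p = T.unit`. -/
def corner : Submodule K M where
  carrier := {m | T.unit • m = m}
  add_mem' := by
    intro a b ha hb
    simp only [Set.mem_ofPred_eq] at *
    rw [smul_add, ha, hb]
  zero_mem' := by simp
  smul_mem' := by
    intro k a ha
    simp only [Set.mem_ofPred_eq] at *
    rw [smul_algebra_smul_comm, ha]

theorem mem_corner {m : M} : m ∈ T.corner K M ↔ T.unit • m = m := Iff.rfl

theorem smul_mem_corner {a : A} (ha : T.unit * a = a) (m : M) : a • m ∈ T.corner K M := by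
  rw [mem_corner, ← mul_smul, ha]

/-- An element `a` with `p a = a` acts on the corner `p M`. -/
def cornerOp (a : A) (ha : T.unit * a = a) : Module.End K (T.corner K M) where
  toFun x := ⟨a • (x : M), T.smul_mem_corner K M ha _⟩
  map_add' x y := by ext; simp
  map_smul' k x := by ext; simp [smul_algebra_smul_comm]

@[simp] theorem cornerOp_apply (a : A) (ha : T.unit * a = a) (x : T.corner K M) :
    (T.cornerOp K M a ha x : M) = a • (x : M) := rfl

/-- The action of a family `T` on the corner `T.unit M`, where its vertices do sum to `1`. -/
def cornerFamily : LeavittFamily G (Module.End K (T.corner K M)) where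
  vt u := T.cornerOp K M (T.vt u) (T.unit_mul_vt u)
  ed e := T.cornerOp K M (T.ed e) (T.unit_mul_ed e)
  gh e := T.cornerOp K M (T.gh e) (T.unit_mul_gh e)
  vt_mul_vt u w := by ext x; split_ifs with h <;> simp [← mul_smul, T.vt_mul_vt, h]
  vt_mul_ed e := by ext x; simp [← mul_smul, T.vt_mul_ed]
  ed_mul_vt e := by ext x; simp [← mul_smul, T.ed_mul_vt]
  vt_mul_gh e := by ext x; simp [← mul_smul, T.vt_mul_gh]
  gh_mul_vt e := by ext x; simp [← mul_smul, T.gh_mul_vt]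
  gh_mul_ed u w := by ext x; split_ifs with h <;> simp [← mul_smul, T.gh_mul_ed, h]
  ck u hu := by
    ext x
    rw [cornerOp_apply, T.ck u hu, ← Finset.sum_filter, ← Finset.sum_filter, Finset.sum_smul]
    simp [mul_smul]

theorem cornerFamily_unit : (T.cornerFamily K M).unit = 1 := by
  ext x
  have := x.2
  rw [mem_corner, unit, Finset.sum_smul] at this
  simpa [unit, cornerFamily] using this

end Corner

end LeavittFamily

/-- The module category object given by a representation of `A` on a `K`-vector space. -/
def repObj {K A X : Type} [Field K] [Ring A] [Algebra K A] [AddCommGroup X] [Module K X]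
    (φ : A →ₐ[K] Module.End K X) : ModuleCat.{0} A :=
  letI : Module A X := Module.compHom X φ.toRingHom
  ModuleCat.of A X

/-- The identity map from `repObj φ` to the underlying space of the representation `φ`. -/
def repObj.equiv {K A X : Type} [Field K] [Ring A] [Algebra K A] [AddCommGroup X] [Module K X]
    (φ : A →ₐ[K] Module.End K X) : repObj φ ≃+ X := AddEquiv.refl X

theorem repObj.equiv_smul {K A X : Type} [Field K] [Ring A] [Algebra K A] [AddCommGroup X]
    [Module K X] (φ : A →ₐ[K] Module.End K X) (a : A) (x : repObj φ) :
    repObj.equiv φ (a • x) = φ a (repObj.equiv φ x) := rfl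

namespace LeavittFamily

variable {G : FinGraph} {A : Type} [Ring A] (T : LeavittFamily G A)
  (K : Type) [Field K] [Algebra K A] (M : Type) [AddCommGroup M] [Module A M] [Module K M]
  [IsScalarTower K A M]

/-- The corner `T.unit M`, made an `L_K(G)`-module through the family `T`. -/
def cornerObj : ModuleCat.{0} (LeavittPathAlgebra K G) :=
  repObj ((T.cornerFamily K M).lift K (T.cornerFamily_unit K M))

/-- Inclusion of the corner module into `M`. Equations in `cornerObj` are proved in `M` by means of
its injectivity. -/
def incl : T.cornerObj K M →+ M :=
  (T.corner K M).subtype.toAddMonoidHom.comp (repObj.equiv _).toAddMonoidHom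

theorem incl_injective : Function.Injective (T.incl K M) :=
  Subtype.val_injective

/-- An element of the corner seen as an element of the `L_K(G)`-module `cornerObj`. -/
def ofCorner : T.corner K M →+ T.cornerObj K M := (repObj.equiv _).symm.toAddMonoidHom

@[simp] theorem incl_ofCorner (x : T.corner K M) : T.incl K M (T.ofCorner K M x) = x := rfl

theorem incl_mem (x : T.cornerObj K M) : T.unit • T.incl K M x = T.incl K M x :=
  (show T.corner K M from x).2

@[simp] theorem incl_vt (u) (x : T.cornerObj K M) :
    T.incl K M ((canon K G).vt u • x) = T.vt u • T.incl K M x := by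
  refine (congrArg Subtype.val (repObj.equiv_smul _ _ x)).trans ?_
  simp only [canon, lift_vert]
  rfl

@[simp] theorem incl_ed (u) (x : T.cornerObj K M) :
    T.incl K M ((canon K G).ed u • x) = T.ed u • T.incl K M x := by
  refine (congrArg Subtype.val (repObj.equiv_smul _ _ x)).trans ?_
  simp only [canon, lift_edge]
  rfl

@[simp] theorem incl_gh (u) (x : T.cornerObj K M) :
    T.incl K M ((canon K G).gh u • x) = T.gh u • T.incl K M x := by
  refine (congrArg Subtype.val (repObj.equiv_smul _ _ x)).trans ?_
  simp only [canon, lift_ghost]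
  rfl

@[simp] theorem incl_algebraMap (k : K) (x : T.cornerObj K M) :
    T.incl K M (algebraMap K (LeavittPathAlgebra K G) k • x) = k • T.incl K M x := by
  refine (congrArg Subtype.val (repObj.equiv_smul _ _ x)).trans ?_
  rw [AlgHom.commutes]
  rfl

end LeavittFamily

/-! ### Edges of the collapsed graph -/

namespace FinGraph

variable (E : FinGraph) (v : E.V)

/-- Edges not touching `v`. -/
abbrev OrdEdge : Type := {e : E.E // E.r e ≠ v ∧ E.s e ≠ v}
/-- Edges ending at `v`. -/
abbrev InEdge : Type := {e : E.E // E.r e = v}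
/-- Edges starting at `v`. -/
abbrev OutEdge : Type := {f : E.E // E.s f = v}

/-- Since `v` carries no loop, every edge is of exactly one of the three types. -/
theorem sum_edges (hnl : ∀ e : E.E, E.s e = v → E.r e ≠ v) {X : Type} [AddCommMonoid X]
    (h : E.E → X) :
    ∑ e, h e = ∑ e : E.OrdEdge v, h e.1 + (∑ e : E.InEdge v, h e.1 + ∑ f : E.OutEdge v, h f.1) := by
  let i : E.OrdEdge v ⊕ (E.InEdge v ⊕ E.OutEdge v) → E.E :=
    Sum.elim Subtype.val (Sum.elim Subtype.val Subtype.val)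
  have hi : Function.Bijective i := by
    constructor
    · rintro (⟨a, ha⟩ | ⟨a, ha⟩ | ⟨a, ha⟩) (⟨b, hb⟩ | ⟨b, hb⟩ | ⟨b, hb⟩) hab <;>
        simp only [i, Sum.elim_inl, Sum.elim_inr] at hab <;> subst hab <;> first | rfl | grind
    · intro e
      by_cases h1 : E.r e = v
      · exact ⟨.inr (.inl ⟨e, h1⟩), rfl⟩
      · by_cases h2 : E.s e = v
        · exact ⟨.inr (.inr ⟨e, h2⟩), rfl⟩
        · exact ⟨.inl ⟨e, h1, h2⟩, rfl⟩
  rw [← hi.sum_comp, Fintype.sum_sum_type, Fintype.sum_sum_type]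
  rfl

section API
variable {E v} (hnl : ∀ e : E.E, E.s e = v → E.r e ≠ v)

/-- A vertex `u ≠ v` as a vertex of the collapsed graph. -/
def cVert (u : E.V) (h : u ≠ v) : (E.collapse v hnl).V := ⟨u, h⟩
/-- A vertex of the collapsed graph as a vertex of `E`. -/
def cVal (u : (E.collapse v hnl).V) : E.V := u.1
/-- The range of an edge leaving `v`, as a vertex of the collapsed graph. -/
def outR (f : E.OutEdge v) : (E.collapse v hnl).V := cVert hnl (E.r f.1) (hnl f.1 f.2)
/-- An edge away from `v` as an edge of the collapsed graph. -/
def cOrd (e : E.OrdEdge v) : (E.collapse v hnl).E := Sum.inl e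
/-- The edge `[ef]` of the collapsed graph. -/
def cPair (e : E.InEdge v) (f : E.OutEdge v) : (E.collapse v hnl).E := Sum.inr (e, f)

theorem cVal_ne (u : (E.collapse v hnl).V) : cVal hnl u ≠ v := u.2
@[simp] theorem cVal_cVert (u : E.V) (h : u ≠ v) : cVal hnl (cVert hnl u h) = u := rfl
@[simp] theorem cVert_cVal (u) (h : cVal hnl u ≠ v) : cVert hnl (cVal hnl u) h = u := rfl
theorem cVal_inj {u w : (E.collapse v hnl).V} : cVal hnl u = cVal hnl w ↔ u = w :=
  Subtype.ext_iff.symm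
@[simp] theorem cVert_inj {u w : E.V} (h : u ≠ v) (h' : w ≠ v) :
    cVert hnl u h = cVert hnl w h' ↔ u = w := Subtype.ext_iff
@[simp] theorem cOrd_inj {e e' : E.OrdEdge v} : cOrd hnl e = cOrd hnl e' ↔ e = e' :=
  Sum.inl_injective.eq_iff
@[simp] theorem cPair_inj {e e' : E.InEdge v} {f f' : E.OutEdge v} :
    cPair hnl e f = cPair hnl e' f' ↔ e = e' ∧ f = f' :=
  Sum.inr_injective.eq_iff.trans Prod.ext_iff
@[simp] theorem cOrd_ne_cPair {e : E.OrdEdge v} {e' : E.InEdge v} {f : E.OutEdge v} :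
    cOrd hnl e ≠ cPair hnl e' f := Sum.inl_ne_inr
@[simp] theorem cPair_ne_cOrd {e : E.OrdEdge v} {e' : E.InEdge v} {f : E.OutEdge v} :
    cPair hnl e' f ≠ cOrd hnl e := Sum.inr_ne_inl
theorem s_ne_of_in {hnl : ∀ e : E.E, E.s e = v → E.r e ≠ v} (e : E.InEdge v) : E.s e.1 ≠ v :=
  fun h => hnl _ h e.2
@[simp] theorem s_cOrd (e : E.OrdEdge v) :
    (E.collapse v hnl).s (cOrd hnl e) = cVert hnl (E.s e.1) e.2.2 := rfl
@[simp] theorem r_cOrd (e : E.OrdEdge v) :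
    (E.collapse v hnl).r (cOrd hnl e) = cVert hnl (E.r e.1) e.2.1 := rfl
@[simp] theorem s_cPair (e : E.InEdge v) (f : E.OutEdge v) :
    (E.collapse v hnl).s (cPair hnl e f) = cVert hnl (E.s e.1) (s_ne_of_in (hnl := hnl) e) := rfl
@[simp] theorem r_cPair (e : E.InEdge v) (f : E.OutEdge v) :
    (E.collapse v hnl).r (cPair hnl e f) = outR hnl f := rfl
@[simp] theorem cVal_outR (f : E.OutEdge v) : cVal hnl (outR hnl f) = E.r f.1 := rfl

theorem collapse_edge_cases (P : (E.collapse v hnl).E → Prop) (h1 : ∀ e, P (cOrd hnl e))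
    (h2 : ∀ e f, P (cPair hnl e f)) (e) : P e := by
  obtain e | ⟨e, f⟩ := e
  · exact h1 e
  · exact h2 e f

end API

theorem sum_collapse (hnl : ∀ e : E.E, E.s e = v → E.r e ≠ v) {X : Type} [AddCommMonoid X]
    (h : (E.collapse v hnl).E → X) :
    ∑ e, h e = ∑ e : E.OrdEdge v, h (cOrd hnl e) +
      ∑ e : E.InEdge v, ∑ f : E.OutEdge v, h (cPair hnl e f) := by
  refine (Fintype.sum_sum_type _).trans ?_
  rw [Fintype.sum_prod_type]
  rfl

end FinGraph

/-! ### Collapsing a Leavitt family -/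

namespace LeavittFamily
open FinGraph
variable {E : FinGraph} {v : E.V} {A : Type} [Ring A] (T : LeavittFamily E A)

/-- The Cuntz–Krieger relation at `v`, as a sum over the subtype of edges leaving `v`. -/
theorem ck_out (hreg : E.IsRegular v) : T.vt v = ∑ f : E.OutEdge v, T.ed f.1 * T.gh f.1 := by
  rw [T.ck v hreg, ← Finset.sum_filter]
  exact Finset.sum_subtype _ (by simp) _

/-- The edges of the collapsed family; `[ef]` is sent to `e f`. -/
def collapseEd (hnl : ∀ e : E.E, E.s e = v → E.r e ≠ v) : (E.collapse v hnl).E → A :=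
  Sum.elim (fun e => T.ed e.1) (fun p => T.ed p.1.1 * T.ed p.2.1)
/-- The ghost edges of the collapsed family; `[ef]*` is sent to `f* e*`. -/
def collapseGh (hnl : ∀ e : E.E, E.s e = v → E.r e ≠ v) : (E.collapse v hnl).E → A :=
  Sum.elim (fun e => T.gh e.1) (fun p => T.gh p.2.1 * T.gh p.1.1)

section
variable (hnl : ∀ e : E.E, E.s e = v → E.r e ≠ v)
@[simp] theorem collapseEd_cOrd (e : E.OrdEdge v) :
    T.collapseEd hnl (cOrd hnl e) = T.ed e.1 := rfl
@[simp] theorem collapseGh_cOrd (e : E.OrdEdge v) :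
    T.collapseGh hnl (cOrd hnl e) = T.gh e.1 := rfl
@[simp] theorem collapseEd_cPair (e : E.InEdge v) (f : E.OutEdge v) :
    T.collapseEd hnl (cPair hnl e f) = T.ed e.1 * T.ed f.1 := rfl
@[simp] theorem collapseGh_cPair (e : E.InEdge v) (f : E.OutEdge v) :
    T.collapseGh hnl (cPair hnl e f) = T.gh f.1 * T.gh e.1 := rfl
end

/-- A Leavitt `E`-family restricts to a Leavitt family of the collapsed graph, with
`[ef] ↦ e f`. Its unit is the sum of all vertices other than `v`. The Cuntz–Krieger relation at
`u ≠ v` comes from that of `E` by expanding `e e* = e v e* = ∑ f, (e f) (e f)*` for each edge `e`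
from `u` to `v`. -/
def collapse (hreg : E.IsRegular v) (hnl : ∀ e : E.E, E.s e = v → E.r e ≠ v) :
    LeavittFamily (E.collapse v hnl) A where
  vt u := T.vt (cVal hnl u)
  ed := T.collapseEd hnl
  gh := T.collapseGh hnl
  vt_mul_vt u w := by simp [T.vt_mul_vt, cVal_inj]
  vt_mul_ed e := by
    induction e using collapse_edge_cases with
    | h1 e => simp [T.vt_mul_ed]
    | h2 e f => simp [← mul_assoc, T.vt_mul_ed]
  ed_mul_vt e := by
    induction e using collapse_edge_cases with
    | h1 e => simp [T.ed_mul_vt]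
    | h2 e f => simp [mul_assoc, T.ed_mul_vt]
  vt_mul_gh e := by
    induction e using collapse_edge_cases with
    | h1 e => simp [T.vt_mul_gh]
    | h2 e f => simp [← mul_assoc, T.vt_mul_gh]
  gh_mul_vt e := by
    induction e using collapse_edge_cases with
    | h1 e => simp [T.gh_mul_vt]
    | h2 e f => simp [mul_assoc, T.gh_mul_vt]
  gh_mul_ed e e' := by
    induction e using collapse_edge_cases with
    | h1 e =>
      induction e' using collapse_edge_cases with
      | h1 e' => simp [T.gh_mul_ed, Subtype.ext_iff]
      | h2 e' f' =>
        have : e.1 ≠ e'.1 := fun h => e.2.1 (h ▸ e'.2)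
        simp [← mul_assoc, T.gh_ed_ne this]
    | h2 e f =>
      induction e' using collapse_edge_cases with
      | h1 e' =>
        have : e.1 ≠ e'.1 := fun h => e'.2.1 (h ▸ e.2)
        simp [mul_assoc, T.gh_ed_ne this]
      | h2 e' f' =>
        have hf : T.vt v * T.ed f'.1 = T.ed f'.1 := by
          have := T.vt_mul_ed f'.1
          rwa [f'.2] at this
        rw [collapseGh_cPair, collapseEd_cPair, mul_assoc, ← mul_assoc (T.gh e.1)]
        by_cases h : e = e'
        · subst h
          rw [T.gh_ed_self, e.2, hf, T.gh_mul_ed]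
          simp [Subtype.ext_iff]
        · rw [T.gh_ed_ne (fun h' => h (Subtype.ext h')), zero_mul, mul_zero, if_neg]
          simp [h]
  ck u hu := by
    have hu' : E.IsRegular (cVal hnl u) := by
      obtain ⟨e, rfl⟩ := hu
      induction e using collapse_edge_cases with
      | h1 e => exact ⟨e.1, rfl⟩
      | h2 e f => exact ⟨e.1, rfl⟩
    rw [T.ck _ hu', E.sum_edges v hnl, E.sum_collapse v hnl]
    have hout : ∑ f : E.OutEdge v, (if E.s f.1 = cVal hnl u then T.ed f.1 * T.gh f.1 else 0) = 0 :=
      Finset.sum_eq_zero fun f _ => if_neg fun h => cVal_ne hnl u (h.symm.trans f.2)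
    rw [hout, add_zero]
    simp only [← cVal_inj, s_cOrd, s_cPair, cVal_cVert, collapseEd_cOrd, collapseGh_cOrd,
      collapseEd_cPair, collapseGh_cPair]
    congr 1
    refine Finset.sum_congr rfl fun e _ => ?_
    split_ifs
    · conv_lhs => rw [← T.ed_mul_vt, e.2, T.ck_out hreg, Finset.mul_sum, Finset.sum_mul]
      simp [mul_assoc]
    · simp

/-! ### Inducing a Leavitt family from the collapsed graph -/

section Ext

variable {hnl : ∀ e : E.E, E.s e = v → E.r e ≠ v} (S : LeavittFamily (E.collapse v hnl) A)
  (K : Type) [Field K] [Algebra K A] (N : Type) [AddCommGroup N] [Module A N] [Module K N]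
  [IsScalarTower K A N]

/-- The space `N × N ^ {f | s(f) = v}` on which a family of `E` is constructed from a module `N`
over the algebra of the collapsed graph. Coordinate `f` of the second factor stands for `f* m`;
only its part in `r(f) N` matters. -/
abbrev ExtSpace (E : FinGraph) (v : E.V) (N : Type) : Type := N × (E.OutEdge v → N)

/-- The operator acting by `a` on the first factor and by zero on the second. -/
def opOld (a : A) : Module.End K (ExtSpace E v N) where
  toFun q := (a • q.1, 0)
  map_add' p q := by simp
  map_smul' k q := by simp [smul_algebra_smul_comm]

@[simp] theorem opOld_apply (a : A) (q : ExtSpace E v N) : opOld K N a q = (a • q.1, 0) := rfl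

/-- The action of the vertex `v`: coordinate `f` is multiplied by `r(f)`. -/
def opV : Module.End K (ExtSpace E v N) where
  toFun q := (0, fun f => S.vt (outR hnl f) • q.2 f)
  map_add' p q := by simp [Pi.add_def]
  map_smul' k q := by simp [smul_algebra_smul_comm, Pi.smul_def]

/-- The action of an edge `e` into `v`: `q ↦ ∑ f, [ef] q_f`. -/
def opIn (e : E.InEdge v) : Module.End K (ExtSpace E v N) where
  toFun q := (∑ f, S.ed (cPair hnl e f) • q.2 f, 0)
  map_add' p q := by simp [Finset.sum_add_distrib]
  map_smul' k q := by simp [smul_algebra_smul_comm, Finset.smul_sum]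

/-- The action of `e*` for an edge `e` into `v`: coordinate `f` of the result is `[ef]* n`. -/
def opInGh (e : E.InEdge v) : Module.End K (ExtSpace E v N) where
  toFun q := (0, fun f => S.gh (cPair hnl e f) • q.1)
  map_add' p q := by simp [Pi.add_def]
  map_smul' k q := by simp [smul_algebra_smul_comm, Pi.smul_def]

/-- The action of an edge `f` out of `v`: `n` is placed, after multiplication by `r(f)`, in
coordinate `f`. -/
def opOut (f : E.OutEdge v) : Module.End K (ExtSpace E v N) where
  toFun q := (0, fun f' => if f = f' then S.vt (outR hnl f) • q.1 else 0)
  map_add' p q := by ext <;> simp; split_ifs <;> simp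
  map_smul' k q := by ext <;> simp [smul_algebra_smul_comm]

/-- The action of `f*` for an edge `f` out of `v`: coordinate `f`, multiplied by `r(f)`. -/
def opOutGh (f : E.OutEdge v) : Module.End K (ExtSpace E v N) where
  toFun q := (S.vt (outR hnl f) • q.2 f, 0)
  map_add' p q := by simp
  map_smul' k q := by simp [smul_algebra_smul_comm]

/-- The action of the vertices of `E` on `ExtSpace E v N`. -/
def extVt (u : E.V) : Module.End K (ExtSpace E v N) :=
  if h : u = v then S.opV K N else opOld K N (S.vt (cVert hnl u h))

/-- The action of the edges of `E` on `ExtSpace E v N`. -/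
def extEd (e : E.E) : Module.End K (ExtSpace E v N) :=
  if h : E.r e = v then S.opIn K N ⟨e, h⟩ else
  if hs : E.s e = v then S.opOut K N ⟨e, hs⟩ else opOld K N (S.ed (cOrd hnl ⟨e, h, hs⟩))

/-- The action of the ghost edges of `E` on `ExtSpace E v N`. -/
def extGh (e : E.E) : Module.End K (ExtSpace E v N) :=
  if h : E.r e = v then S.opInGh K N ⟨e, h⟩ else
  if hs : E.s e = v then S.opOutGh K N ⟨e, hs⟩ else opOld K N (S.gh (cOrd hnl ⟨e, h, hs⟩))

theorem extVt_v : S.extVt K N v = S.opV K N := by simp [extVt]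
theorem extVt_ne (u : E.V) (h : u ≠ v) :
    S.extVt K N u = opOld K N (S.vt (cVert hnl u h)) := by simp [extVt, h]
theorem extEd_in (e : E.InEdge v) : S.extEd K N e.1 = S.opIn K N e := by simp [extEd, e.2]
theorem extEd_out (e : E.OutEdge v) : S.extEd K N e.1 = S.opOut K N e := by
  simp [extEd, e.2, hnl e.1 e.2]
theorem extEd_ord (e : E.OrdEdge v) : S.extEd K N e.1 = opOld K N (S.ed (cOrd hnl e)) := by
  simp [extEd, e.2.1, e.2.2]
theorem extGh_in (e : E.InEdge v) : S.extGh K N e.1 = S.opInGh K N e := by simp [extGh, e.2]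
theorem extGh_out (e : E.OutEdge v) : S.extGh K N e.1 = S.opOutGh K N e := by
  simp [extGh, e.2, hnl e.1 e.2]
theorem extGh_ord (e : E.OrdEdge v) : S.extGh K N e.1 = opOld K N (S.gh (cOrd hnl e)) := by
  simp [extGh, e.2.1, e.2.2]

theorem edge_cases (v : E.V) (P : E.E → Prop) (h1 : ∀ e : E.OrdEdge v, P e.1)
    (h2 : ∀ e : E.InEdge v, P e.1) (h3 : ∀ e : E.OutEdge v, P e.1) (e : E.E) : P e := by
  by_cases h : E.r e = v
  · exact h2 ⟨e, h⟩
  · by_cases h' : E.s e = v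
    · exact h3 ⟨e, h'⟩
    · exact h1 ⟨e, h, h'⟩

theorem opOld_mul (a b : A) : opOld (E := E) (v := v) K N (a * b) = opOld K N a * opOld K N b := by
  ext <;> simp [opOld, mul_smul]

theorem extVt_r_in (e : E.InEdge v) :
    S.extVt K N (E.r e.1) = S.opV K N := by rw [e.2, extVt_v]
theorem extVt_s_out (f : E.OutEdge v) :
    S.extVt K N (E.s f.1) = S.opV K N := by rw [f.2, extVt_v]
theorem extVt_r_out (f : E.OutEdge v) :
    S.extVt K N (E.r f.1) = opOld K N (S.vt (outR hnl f)) :=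
  S.extVt_ne K N _ (hnl f.1 f.2)

theorem vt_outR_mul_gh (e : E.InEdge v) (f : E.OutEdge v) :
    S.vt (outR hnl f) * S.gh (cPair hnl e f) = S.gh (cPair hnl e f) := S.vt_mul_gh (cPair hnl e f)
theorem ed_mul_vt_outR (e : E.InEdge v) (f : E.OutEdge v) :
    S.ed (cPair hnl e f) * S.vt (outR hnl f) = S.ed (cPair hnl e f) := S.ed_mul_vt (cPair hnl e f)
theorem vt_mul_ed_cPair (e : E.InEdge v) (f : E.OutEdge v) (h : E.s e.1 ≠ v) :
    S.vt (cVert hnl (E.s e.1) h) * S.ed (cPair hnl e f) = S.ed (cPair hnl e f) :=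
  S.vt_mul_ed (cPair hnl e f)
theorem gh_cPair_mul_vt (e : E.InEdge v) (f : E.OutEdge v) (h : E.s e.1 ≠ v) :
    S.gh (cPair hnl e f) * S.vt (cVert hnl (E.s e.1) h) = S.gh (cPair hnl e f) :=
  S.gh_mul_vt (cPair hnl e f)

/-- A family of the collapsed graph acting on `N` induces a Leavitt `E`-family acting on
`ExtSpace E v N`. -/
def ext (hreg : E.IsRegular v) : LeavittFamily E (Module.End K (ExtSpace E v N)) where
  vt := S.extVt K N
  ed := S.extEd K N
  gh := S.extGh K N
  vt_mul_vt u w := by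
    by_cases hu : u = v
    · by_cases hw : w = v
      · subst hu; subst hw
        rw [if_pos rfl, extVt_v]
        ext <;> simp [opV, ← mul_smul, vt_self]
      · subst hu
        rw [if_neg (Ne.symm hw), extVt_v, S.extVt_ne K N w hw]
        ext <;> simp [opV, opOld]
    · rw [S.extVt_ne K N u hu]
      by_cases hw : w = v
      · subst hw
        rw [if_neg hu, extVt_v]
        ext <;> simp [opV, opOld]
      · rw [S.extVt_ne K N w hw, ← opOld_mul]
        by_cases h : u = w
        · subst h
          rw [if_pos rfl, vt_self]
        · rw [if_neg h, S.vt_ne (by simpa using h)]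
          ext <;> simp [opOld]
  vt_mul_ed e := by
    induction e using edge_cases v with
    | h1 e => rw [extEd_ord, S.extVt_ne K N _ e.2.2, ← opOld_mul, ← s_cOrd, S.vt_mul_ed]
    | h2 e =>
      rw [extEd_in, S.extVt_ne K N _ (s_ne_of_in (hnl := hnl) e)]
      ext <;> simp [opIn, opOld, Finset.smul_sum, ← mul_smul, vt_mul_ed_cPair]
    | h3 e =>
      rw [extEd_out, extVt_s_out]
      ext x f <;> simp [opV, opOut]
      split_ifs with h
      · subst h; simp [← mul_smul, vt_self]
      · rfl
  ed_mul_vt e := by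
    induction e using edge_cases v with
    | h1 e => rw [extEd_ord, S.extVt_ne K N _ e.2.1, ← opOld_mul, ← r_cOrd, S.ed_mul_vt]
    | h2 e =>
      rw [extEd_in, extVt_r_in]
      ext <;> simp [opIn, opV, ← mul_smul, ed_mul_vt_outR]
    | h3 e =>
      rw [extEd_out, extVt_r_out]
      ext <;> simp [opOld, opOut, ← mul_smul, vt_self]
  vt_mul_gh e := by
    induction e using edge_cases v with
    | h1 e => rw [extGh_ord, S.extVt_ne K N _ e.2.1, ← opOld_mul, ← r_cOrd, S.vt_mul_gh]
    | h2 e =>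
      rw [extGh_in, extVt_r_in]
      ext <;> simp [opInGh, opV, ← mul_smul, vt_outR_mul_gh]
    | h3 e =>
      rw [extGh_out, extVt_r_out]
      ext <;> simp [opOld, opOutGh, ← mul_smul, vt_self]
  gh_mul_vt e := by
    induction e using edge_cases v with
    | h1 e => rw [extGh_ord, S.extVt_ne K N _ e.2.2, ← opOld_mul, ← s_cOrd, S.gh_mul_vt]
    | h2 e =>
      rw [extGh_in, S.extVt_ne K N _ (s_ne_of_in (hnl := hnl) e)]
      ext <;> simp [opInGh, opOld, ← mul_smul, gh_cPair_mul_vt]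
    | h3 e =>
      rw [extGh_out, extVt_s_out]
      ext <;> simp [opV, opOutGh, ← mul_smul, vt_self]
  gh_mul_ed e f := by
    induction e using edge_cases v with
    | h1 e =>
      rw [extGh_ord]
      induction f using edge_cases v with
      | h1 f =>
        rw [extEd_ord, ← opOld_mul, S.gh_mul_ed, S.extVt_ne K N _ e.2.1]
        by_cases h : e = f
        · simp [h]
        · rw [if_neg (by simpa using h), if_neg (fun h' => h (Subtype.ext h'))]
          ext <;> simp [opOld]
      | h2 f =>
        rw [extEd_in, if_neg (fun h : e.1 = f.1 => e.2.1 (h ▸ f.2))]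
        ext <;> simp [opOld, opIn, Finset.smul_sum, ← mul_smul, S.gh_mul_ed]
      | h3 f =>
        rw [extEd_out, if_neg (fun h : e.1 = f.1 => e.2.2 (h ▸ f.2))]
        ext <;> simp [opOld, opOut]
    | h2 e =>
      rw [extGh_in]
      induction f using edge_cases v with
      | h1 f =>
        rw [extEd_ord, if_neg (fun h : e.1 = f.1 => f.2.1 (h ▸ e.2))]
        ext <;> simp [opOld, opInGh, ← mul_smul, S.gh_mul_ed]
      | h2 f =>
        rw [extEd_in, extVt_r_in]
        by_cases h : e = f
        · subst h
          rw [if_pos rfl]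
          ext x g <;>
            simp [opV, opInGh, opIn, Finset.smul_sum, ← mul_smul, S.gh_mul_ed]
        · rw [if_neg (fun h' => h (Subtype.ext h'))]
          ext <;> simp [opInGh, opIn, Finset.smul_sum, ← mul_smul, S.gh_mul_ed, h]
      | h3 f =>
        rw [extEd_out, if_neg (fun h : e.1 = f.1 => hnl f.1 f.2 (h ▸ e.2))]
        ext <;> simp [opInGh, opOut]
    | h3 e =>
      rw [extGh_out]
      induction f using edge_cases v with
      | h1 f =>
        rw [extEd_ord, if_neg (fun h : e.1 = f.1 => f.2.2 (h ▸ e.2))]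
        ext <;> simp [opOld, opOutGh]
      | h2 f =>
        rw [extEd_in, if_neg (fun h : e.1 = f.1 => hnl e.1 e.2 (h ▸ f.2))]
        ext <;> simp [opIn, opOutGh]
      | h3 f =>
        rw [extEd_out, extVt_r_out]
        by_cases h : e = f
        · subst h
          rw [if_pos rfl]
          ext <;> simp [opOut, opOutGh, opOld, ← mul_smul, vt_self]
        · rw [if_neg (fun h' => h (Subtype.ext h'))]
          ext <;> simp [opOut, opOutGh, Ne.symm h]
  ck u hu := by
    rw [E.sum_edges v hnl]
    simp only [extEd_ord, extEd_in, extEd_out, extGh_ord, extGh_in, extGh_out]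
    by_cases h : u = v
    · subst h
      have h1 : ∀ e : E.InEdge u, E.s e.1 ≠ u := fun e h => hnl _ h e.2
      rw [extVt_v]
      simp only [(fun e : E.OrdEdge u => e.2.2), (fun f : E.OutEdge u => f.2), h1, if_false, if_true,
        Finset.sum_const_zero, zero_add]
      refine LinearMap.ext fun q => Prod.ext ?_ (funext fun f => ?_)
      · simp [opV, opOut, opOutGh, Prod.fst_sum]
      · simp [opV, opOut, opOutGh, Prod.snd_sum, ← mul_smul, vt_self]
    · have h1 : ∀ f : E.OutEdge v, E.s f.1 ≠ u := fun f h' => h (h'.symm.trans f.2)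
      have hu' : (E.collapse v hnl).IsRegular (cVert hnl u h) := by
        obtain ⟨e, he⟩ := hu
        obtain ⟨f, hf⟩ := hreg
        by_cases hr : E.r e = v
        · exact ⟨cPair hnl ⟨e, hr⟩ ⟨f, hf⟩, Subtype.ext he⟩
        · exact ⟨cOrd hnl ⟨e, hr, fun hs => h (he.symm.trans hs)⟩, Subtype.ext he⟩
      rw [S.extVt_ne K N u h, S.ck _ hu', E.sum_collapse v hnl]
      simp only [h1, if_false, Finset.sum_const_zero, add_zero]
      simp only [s_cOrd, s_cPair, cVert_inj]
      refine LinearMap.ext fun q => Prod.ext ?_ (funext fun f => ?_)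
      · simp only [opOld_apply, LinearMap.add_apply, LinearMap.sum_apply, Prod.fst_add,
          Prod.fst_sum, add_smul, Finset.sum_smul]
        congr 1
        · refine Finset.sum_congr rfl fun e _ => ?_
          split_ifs <;> simp [mul_smul]
        · refine Finset.sum_congr rfl fun e _ => ?_
          split_ifs <;> simp [mul_smul, opIn, opInGh]
      · simp only [opOld_apply, LinearMap.add_apply, LinearMap.sum_apply, Prod.snd_add,
          Prod.snd_sum, Pi.add_apply, Finset.sum_apply]
        rw [Finset.sum_eq_zero, Finset.sum_eq_zero]
        · simp
        · intro e _
          split_ifs <;> simp [opIn]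
        · intro e _
          split_ifs <;> simp

end Ext
end LeavittFamily

/-! ### The corner functor is fully faithful -/

namespace LeavittFamily
open FinGraph CategoryTheory
open scoped ModuleCat

section
variable {E : FinGraph} {v : E.V} {A : Type} [Ring A] (T : LeavittFamily E A)
  (hreg : E.IsRegular v) (hnl : ∀ e : E.E, E.s e = v → E.r e ≠ v)

theorem collapse_unit : T.vt v + (T.collapse hreg hnl).unit = T.unit :=
  (Fintype.sum_eq_add_sum_subtype_ne T.vt v).symm

theorem collapse_unit_of_unit (h1 : T.unit = 1) : (T.collapse hreg hnl).unit = 1 - T.vt v := by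
  rw [← h1, ← T.collapse_unit hreg hnl, add_sub_cancel_left]

@[simp] theorem collapse_vt (u) : (T.collapse hreg hnl).vt u = T.vt (cVal hnl u) := rfl
@[simp] theorem collapse_ed_cOrd (e : E.OrdEdge v) :
    (T.collapse hreg hnl).ed (cOrd hnl e) = T.ed e.1 := rfl
@[simp] theorem collapse_gh_cOrd (e : E.OrdEdge v) :
    (T.collapse hreg hnl).gh (cOrd hnl e) = T.gh e.1 := rfl
@[simp] theorem collapse_ed_cPair (e : E.InEdge v) (f : E.OutEdge v) :
    (T.collapse hreg hnl).ed (cPair hnl e f) = T.ed e.1 * T.ed f.1 := rfl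
@[simp] theorem collapse_gh_cPair (e : E.InEdge v) (f : E.OutEdge v) :
    (T.collapse hreg hnl).gh (cPair hnl e f) = T.gh f.1 * T.gh e.1 := rfl
end

variable {K : Type} [Field K] {E : FinGraph} {v : E.V}
  (hreg : E.IsRegular v) (hnl : ∀ e : E.E, E.s e = v → E.r e ≠ v)

/-- The family of the collapsed graph formed inside `L_K(E)`. Its unit is `p = 1 - v`. -/
abbrev collapseCanon : LeavittFamily (E.collapse v hnl) (LeavittPathAlgebra K E) :=
  (canon K E).collapse hreg hnl

section Functor

variable (M M₂ : ModuleCat.{0} (LeavittPathAlgebra K E))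

/-- The functor on objects: `M ↦ p M` with `p = 1 - v`. -/
abbrev fObj : ModuleCat.{0} (LeavittPathAlgebra K (E.collapse v hnl)) :=
  (collapseCanon (K := K) hreg hnl).cornerObj K M

/-- The inclusion `p M → M`. -/
abbrev fIncl : fObj hreg hnl M →+ M := (collapseCanon (K := K) hreg hnl).incl K M

variable {M M₂}

/-- The restriction of a homomorphism `M → M₂` to `p M → p M₂`, as an additive map. -/
def fMapAux (g : M ⟶ M₂) : fObj hreg hnl M →+ fObj hreg hnl M₂ :=
  AddMonoidHom.mk' (fun x => (collapseCanon (K := K) hreg hnl).ofCorner K M₂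
    ⟨g.hom (fIncl hreg hnl M x), by rw [mem_corner, ← map_smul, incl_mem]⟩) (by
    intro x y
    apply incl_injective
    simp)

@[simp] theorem fIncl_fMapAux (g : M ⟶ M₂) (x : fObj hreg hnl M) :
    fIncl hreg hnl M₂ (fMapAux hreg hnl g x) = g.hom (fIncl hreg hnl M x) := rfl

theorem fMapAux_smul (g : M ⟶ M₂) (a : LeavittPathAlgebra K (E.collapse v hnl))
    (x : fObj hreg hnl M) : fMapAux hreg hnl g (a • x) = a • fMapAux hreg hnl g x := by
  refine linear_of_gens _ ?_ ?_ ?_ ?_ a x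
  · intro k x
    apply incl_injective
    rw [fIncl_fMapAux, incl_algebraMap, incl_algebraMap, fIncl_fMapAux]
    exact (g.hom.restrictScalars K).map_smul k _
  all_goals
    intro k x
    apply incl_injective
    simp

/-- The functor on morphisms: restriction to `p M → p M₂`. -/
def fMap (g : M ⟶ M₂) : fObj hreg hnl M ⟶ fObj hreg hnl M₂ :=
  ModuleCat.ofHom (X := fObj hreg hnl M) (Y := fObj hreg hnl M₂)
    ({ fMapAux hreg hnl g with map_smul' := fMapAux_smul hreg hnl g } :
      fObj hreg hnl M →ₗ[LeavittPathAlgebra K (E.collapse v hnl)] fObj hreg hnl M₂)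

@[simp] theorem fIncl_fMap (g : M ⟶ M₂) (x : fObj hreg hnl M) :
    fIncl hreg hnl M₂ ((fMap hreg hnl g).hom x) = g.hom (fIncl hreg hnl M x) := rfl

/-- The functor `M ↦ (1 - v) M` from `L_K(E)`-modules to modules over the Leavitt path algebra of
the collapsed graph. -/
def collapseFunctor : ModuleCat.{0} (LeavittPathAlgebra K E) ⥤
    ModuleCat.{0} (LeavittPathAlgebra K (E.collapse v hnl)) where
  obj M := fObj hreg hnl M
  map g := fMap hreg hnl g
  map_id M := by
    ext x
    exact incl_injective _ _ _ rfl
  map_comp g h := by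
    ext x
    exact incl_injective _ _ _ rfl

variable (M) in
/-- The projection `m ↦ p m` onto the corner. -/
def fProj : M →+ fObj hreg hnl M :=
  AddMonoidHom.mk' (fun m => (collapseCanon (K := K) hreg hnl).ofCorner K M
    ⟨(collapseCanon (K := K) hreg hnl).unit • m,
      smul_mem_corner _ _ _ (unit_mul_unit _) _⟩) (by
    intro x y
    apply incl_injective
    simp)

theorem fIncl_fProj (m : M) : fIncl hreg hnl M (fProj hreg hnl M m) =
    (collapseCanon (K := K) hreg hnl).unit • m := rfl

theorem fProj_fIncl (x : fObj hreg hnl M) : fProj hreg hnl M (fIncl hreg hnl M x) = x := by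
  apply incl_injective
  exact incl_mem _ _ _ _

theorem canon_unit_eq :
    (collapseCanon (K := K) hreg hnl).unit = 1 - (canon K E).vt v :=
  collapse_unit_of_unit _ _ _ (canon_unit K E)

/-- Every `m` equals `p m + ∑ f, f p f* m`, the sum being over the edges `f` leaving `v`. In
particular `p M` generates `M`; this is where regularity of `v` enters. -/
theorem fIncl_fProj_add (m : M) :
    fIncl hreg hnl M (fProj hreg hnl M m) + ∑ f : E.OutEdge v,
      (canon K E).ed f.1 • fIncl hreg hnl M (fProj hreg hnl M ((canon K E).gh f.1 • m)) = m := by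
  have h : ∀ f : E.OutEdge v, (canon K E).ed f.1 * ((1 - (canon K E).vt v) * (canon K E).gh f.1)
      = (canon K E).ed f.1 * (canon K E).gh f.1 := by
    intro f
    rw [sub_mul, (canon K E).vt_gh_ne (hnl f.1 f.2).symm, one_mul, sub_zero]
  simp only [fIncl_fProj, canon_unit_eq, ← mul_smul, h]
  rw [← Finset.sum_smul, ← (canon K E).ck_out hreg, ← add_smul, sub_add_cancel, one_smul]

theorem vt_smul_fIncl (x : fObj hreg hnl M) : (canon K E).vt v • fIncl hreg hnl M x = 0 := by
  rw [← incl_mem, canon_unit_eq, ← mul_smul, mul_sub, mul_one, vt_self, sub_self, zero_smul]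

theorem fProj_vt_v (m : M) : fProj hreg hnl M ((canon K E).vt v • m) = 0 := by
  apply incl_injective
  rw [fIncl_fProj, map_zero, canon_unit_eq, ← mul_smul, sub_mul, one_mul, vt_self, sub_self,
    zero_smul]

/-- If `a = p a p` and `b` acts on `p M` as `a`, then the projection onto `p M` takes the action of
`a` to that of `b`. -/
theorem fProj_smul (a : LeavittPathAlgebra K E) (b : LeavittPathAlgebra K (E.collapse v hnl))
    (hb : ∀ x : fObj hreg hnl M, fIncl hreg hnl M (b • x) = a • fIncl hreg hnl M x)
    (h1 : (canon K E).vt v * a = 0) (h2 : a * (canon K E).vt v = 0) (m : M) :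
    fProj hreg hnl M (a • m) = b • fProj hreg hnl M m := by
  apply incl_injective
  rw [hb, fIncl_fProj, fIncl_fProj, canon_unit_eq, ← mul_smul, ← mul_smul, sub_mul, mul_sub, h1, h2]
  simp

theorem gh_smul_fIncl (f : E.OutEdge v) (x : fObj hreg hnl M) :
    (canon K E).gh f.1 • fIncl hreg hnl M x = 0 := by
  rw [← (canon K E).gh_mul_vt, f.2, mul_smul, vt_smul_fIncl, smul_zero]

theorem ed_smul_fIncl (e : E.InEdge v) (x : fObj hreg hnl M) :
    (canon K E).ed e.1 • fIncl hreg hnl M x = 0 := by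
  rw [← (canon K E).ed_mul_vt, e.2, mul_smul, vt_smul_fIncl, smul_zero]

theorem fProj_ed_out (f : E.OutEdge v) (m : M) :
    fProj hreg hnl M ((canon K E).ed f.1 • m) = 0 := by
  rw [← (canon K E).vt_mul_ed, f.2, mul_smul, fProj_vt_v]

theorem fProj_gh_in (e : E.InEdge v) (m : M) :
    fProj hreg hnl M ((canon K E).gh e.1 • m) = 0 := by
  rw [← (canon K E).vt_mul_gh, e.2, mul_smul, fProj_vt_v]

theorem fProj_algebraMap (k : K) (m : M) :
    fProj hreg hnl M (algebraMap K (LeavittPathAlgebra K E) k • m) =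
      algebraMap K (LeavittPathAlgebra K (E.collapse v hnl)) k • fProj hreg hnl M m := by
  apply incl_injective
  rw [incl_algebraMap, fIncl_fProj, fIncl_fProj, algebraMap_smul, smul_algebra_smul_comm]

section Full

variable (h : fObj hreg hnl M ⟶ fObj hreg hnl M₂)

/-- The extension of a homomorphism `h : p M → p M₂` to `M → M₂`, given by
`m ↦ h (p m) + ∑ f, f h (p f* m)`; the formula is forced by `fIncl_fProj_add`. -/
def extendHom : M →+ M₂ :=
  (fIncl hreg hnl M₂).comp (h.hom.toAddMonoidHom.comp (fProj hreg hnl M)) +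
    ∑ f : E.OutEdge v, (DistribSMul.toAddMonoidHom M₂ ((canon K E).ed f.1)).comp
      ((fIncl hreg hnl M₂).comp (h.hom.toAddMonoidHom.comp ((fProj hreg hnl M).comp
        (DistribSMul.toAddMonoidHom M ((canon K E).gh f.1)))))

theorem extendHom_apply (m : M) : extendHom hreg hnl h m =
    fIncl hreg hnl M₂ (h.hom (fProj hreg hnl M m)) + ∑ f : E.OutEdge v, (canon K E).ed f.1 •
      fIncl hreg hnl M₂ (h.hom (fProj hreg hnl M ((canon K E).gh f.1 • m))) := by
  simp [extendHom]

theorem extendHom_fIncl (x : fObj hreg hnl M) :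
    extendHom hreg hnl h (fIncl hreg hnl M x) = fIncl hreg hnl M₂ (h.hom x) := by
  simp [extendHom_apply, fProj_fIncl, gh_smul_fIncl]

/-- `extendHom` commutes with every element `a = p a p` that acts on the corners as some element of
the algebra of the collapsed graph. -/
theorem extendHom_old (a : LeavittPathAlgebra K E) (b : LeavittPathAlgebra K (E.collapse v hnl))
    (hb : ∀ x : fObj hreg hnl M, fIncl hreg hnl M (b • x) = a • fIncl hreg hnl M x)
    (hb' : ∀ x : fObj hreg hnl M₂, fIncl hreg hnl M₂ (b • x) = a • fIncl hreg hnl M₂ x)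
    (h1 : (canon K E).vt v * a = 0) (h2 : a * (canon K E).vt v = 0) (m : M) :
    extendHom hreg hnl h (a • m) = a • extendHom hreg hnl h m := by
  have hg : ∀ f : E.OutEdge v, (canon K E).gh f.1 * a = 0 := fun f => by
    rw [← (canon K E).gh_mul_vt, f.2, mul_assoc, h1, mul_zero]
  have he : ∀ f : E.OutEdge v, a * (canon K E).ed f.1 = 0 := fun f => by
    rw [← (canon K E).vt_mul_ed, f.2, ← mul_assoc, h2, zero_mul]
  rw [extendHom_apply, extendHom_apply, fProj_smul hreg hnl a b hb h1 h2]
  simp [Finset.smul_sum, ← mul_smul, hg, he, hb']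

theorem extendHom_smul (a : LeavittPathAlgebra K E) (m : M) :
    extendHom hreg hnl h (a • m) = a • extendHom hreg hnl h m := by
  refine linear_of_gens _ ?_ ?_ ?_ ?_ a m
  · intro k m
    have hc : ∀ f : E.OutEdge v, (canon K E).gh f.1 •
        algebraMap K (LeavittPathAlgebra K E) k • m =
        algebraMap K (LeavittPathAlgebra K E) k • (canon K E).gh f.1 • m := fun f => by
      rw [← mul_smul, ← Algebra.commutes, mul_smul]
    have hc' : ∀ (f : E.OutEdge v) (x : M₂), (canon K E).ed f.1 •
        algebraMap K (LeavittPathAlgebra K E) k • x =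
        algebraMap K (LeavittPathAlgebra K E) k • (canon K E).ed f.1 • x := fun f x => by
      rw [← mul_smul, ← Algebra.commutes, mul_smul]
    simp only [extendHom_apply, smul_add, Finset.smul_sum, hc, fProj_algebraMap, map_smul,
      incl_algebraMap, ← algebraMap_smul (LeavittPathAlgebra K E) k, hc']
  · intro u m
    by_cases hu : u = v
    · subst hu
      rw [extendHom_apply, extendHom_apply, fProj_vt_v]
      have h1 : ∀ f : E.OutEdge u, (canon K E).gh f.1 * (canon K E).vt u = (canon K E).gh f.1 := by
        intro f
        have := (canon K E).gh_mul_vt f.1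
        rwa [f.2] at this
      have h2 : ∀ f : E.OutEdge u, (canon K E).vt u * (canon K E).ed f.1 = (canon K E).ed f.1 := by
        intro f
        have := (canon K E).vt_mul_ed f.1
        rwa [f.2] at this
      simp [Finset.smul_sum, ← mul_smul, h1, h2, vt_smul_fIncl]
    · refine extendHom_old hreg hnl h _ ((canon K _).vt (cVert hnl u hu)) ?_ ?_
        (vt_ne _ (Ne.symm hu)) (vt_ne _ hu) m <;> simp
  · intro e m
    induction e using edge_cases v with
    | h1 e =>
      refine extendHom_old hreg hnl h _ ((canon K _).ed (cOrd hnl e)) ?_ ?_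
        (vt_ed_ne _ e.2.2.symm) (ed_vt_ne _ e.2.1) m <;> simp
    | h2 e =>
      have hp : fProj hreg hnl M ((canon K E).ed e.1 • m) =
          ∑ f : E.OutEdge v, (canon K _).ed (cPair hnl e f) •
            fProj hreg hnl M ((canon K E).gh f.1 • m) := by
        have hv : (canon K E).ed e.1 * (canon K E).vt v = (canon K E).ed e.1 := by
          conv_rhs => rw [← (canon K E).ed_mul_vt, e.2]
        apply incl_injective
        simp only [map_sum, incl_ed, collapse_ed_cPair, mul_smul, ← Finset.smul_sum]
        have h0 := congrArg ((canon K E).ed e.1 • ·) (fIncl_fProj_add hreg hnl m)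
        simp only [smul_add, ed_smul_fIncl, zero_add] at h0
        rw [h0, fIncl_fProj, canon_unit_eq, ← mul_smul, sub_mul, one_mul,
          vt_ed_ne _ (s_ne_of_in (hnl := hnl) e).symm, sub_zero]
      have hg : ∀ f : E.OutEdge v, (canon K E).gh f.1 * (canon K E).ed e.1 = 0 := fun f =>
        gh_ed_ne _ fun h => hnl f.1 f.2 (h ▸ e.2)
      rw [extendHom_apply, extendHom_apply, hp]
      simp [Finset.smul_sum, ← mul_smul, hg, ed_smul_fIncl]
    | h3 e =>
      have hp : ∀ f : E.OutEdge v,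
          fProj hreg hnl M ((canon K E).gh f.1 • (canon K E).ed e.1 • m) =
            if f = e then (canon K _).vt (outR hnl e) • fProj hreg hnl M m else 0 := by
        intro f
        split_ifs with hf
        · subst hf
          rw [← mul_smul, gh_ed_self]
          exact fProj_smul hreg hnl _ _ (by simp) (vt_ne _ (hnl f.1 f.2).symm)
            (vt_ne _ (hnl f.1 f.2)) m
        · rw [← mul_smul, gh_ed_ne _ (fun h => hf (Subtype.ext h)), zero_smul, map_zero]
      have he : ∀ f : E.OutEdge v, (canon K E).ed e.1 * (canon K E).ed f.1 = 0 := fun f =>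
        ed_ed_ne _ (by rw [f.2]; exact hnl e.1 e.2)
      have hr : (canon K E).ed e.1 * (canon K E).vt (E.r e.1) = (canon K E).ed e.1 :=
        (canon K E).ed_mul_vt _
      rw [extendHom_apply, extendHom_apply, fProj_ed_out]
      simp only [hp]
      rw [Finset.sum_eq_single e (by intro f _ hf; simp [hf]) (by simp)]
      simp [Finset.smul_sum, ← mul_smul, he, hr]
  · intro e m
    induction e using edge_cases v with
    | h1 e =>
      refine extendHom_old hreg hnl h _ ((canon K _).gh (cOrd hnl e)) ?_ ?_
        (vt_gh_ne _ e.2.1.symm) (gh_vt_ne _ e.2.2) m <;> simp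
    | h2 e =>
      have hs := s_ne_of_in (hnl := hnl) e
      have hp : ∀ f : E.OutEdge v,
          fProj hreg hnl M ((canon K E).gh f.1 • (canon K E).gh e.1 • m) =
            (canon K _).gh (cPair hnl e f) • fProj hreg hnl M m := by
        intro f
        rw [← mul_smul]
        refine fProj_smul hreg hnl _ _ (by simp) ?_ ?_ m
        · rw [← mul_assoc, vt_gh_ne _ (hnl f.1 f.2).symm, zero_mul]
        · rw [mul_assoc, gh_vt_ne _ hs, mul_zero]
      have hg : ∀ f : E.OutEdge v, (canon K E).gh e.1 * (canon K E).ed f.1 = 0 := fun f =>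
        gh_ed_ne _ fun h => hs (h ▸ f.2)
      have hv : (canon K E).vt v * (canon K E).gh e.1 = (canon K E).gh e.1 := by
        conv_rhs => rw [← (canon K E).vt_mul_gh, e.2]
      rw [extendHom_apply, extendHom_apply, fProj_gh_in]
      simp only [hp, map_smul, incl_gh, collapse_gh_cPair]
      simp only [smul_add, Finset.smul_sum, ← mul_smul, hg, zero_smul,
        Finset.sum_const_zero, add_zero, map_zero, zero_add]
      simp only [← mul_assoc]
      rw [← Finset.sum_smul, ← Finset.sum_mul, ← (canon K E).ck_out hreg, hv]
    | h3 e =>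
      have hgg : ∀ f : E.OutEdge v, (canon K E).gh f.1 * (canon K E).gh e.1 = 0 := fun f =>
        gh_gh_ne _ (by rw [f.2]; exact (hnl e.1 e.2).symm)
      have hr : (canon K E).vt (E.r e.1) * (canon K E).gh e.1 = (canon K E).gh e.1 :=
        (canon K E).vt_mul_gh _
      have hp : (canon K _).vt (outR hnl e) • fProj hreg hnl M ((canon K E).gh e.1 • m) =
          fProj hreg hnl M ((canon K E).gh e.1 • m) := by
        rw [← fProj_smul hreg hnl _ _ (by simp) (vt_ne _ (hnl e.1 e.2).symm)
            (vt_ne _ (hnl e.1 e.2)), ← mul_smul, hr]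
      have hi : (canon K E).vt (E.r e.1) •
          fIncl hreg hnl M₂ (h.hom (fProj hreg hnl M ((canon K E).gh e.1 • m))) =
          fIncl hreg hnl M₂ (h.hom (fProj hreg hnl M ((canon K E).gh e.1 • m))) := by
        conv_rhs => rw [← hp, map_smul, incl_vt, collapse_vt]
        simp
      rw [extendHom_apply, extendHom_apply]
      simp only [← mul_smul, hgg, zero_smul, map_zero, smul_zero, Finset.sum_const_zero, add_zero,
        smul_add, gh_smul_fIncl, zero_add, Finset.smul_sum]
      rw [Finset.sum_eq_single e (fun f _ hf => by
        rw [gh_ed_ne _ (fun h => hf (Subtype.ext h.symm)), zero_smul]) (by simp), gh_ed_self, hi]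

end Full

instance : (collapseFunctor (K := K) hreg hnl).Faithful where
  map_injective {M M₂} g g' h := by
    ext m
    have h' : ∀ x : fObj hreg hnl M, g.hom (fIncl hreg hnl M x) = g'.hom (fIncl hreg hnl M x) :=
      fun x => congrArg (fun k : fObj hreg hnl M ⟶ fObj hreg hnl M₂ => fIncl hreg hnl M₂ (k.hom x)) h
    rw [← fIncl_fProj_add hreg hnl m]
    simp [h']

instance : (collapseFunctor (K := K) hreg hnl).Full where
  map_surjective {M M₂} h := by
    refine ⟨ModuleCat.ofHom { extendHom hreg hnl h with
      map_smul' := extendHom_smul hreg hnl h }, ?_⟩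
    ext x
    exact incl_injective _ _ _ (extendHom_fIncl hreg hnl h x)

end Functor
end LeavittFamily

/-! ### The corner functor is essentially surjective -/

namespace LeavittFamily
open FinGraph CategoryTheory
open scoped ModuleCat

section
variable {E : FinGraph} {v : E.V} {A : Type} [Ring A] (hreg : E.IsRegular v)
  {hnl : ∀ e : E.E, E.s e = v → E.r e ≠ v} (S : LeavittFamily (E.collapse v hnl) A)
  (K : Type) [Field K] [Algebra K A] (N : Type) [AddCommGroup N] [Module A N] [Module K N]
  [IsScalarTower K A N]

theorem ext_collapse_unit (q : ExtSpace E v N) :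
    ((S.ext K N hreg).collapse hreg hnl).unit q = (S.unit • q.1, 0) := by
  have h : ∀ u, ((S.ext K N hreg).collapse hreg hnl).vt u = opOld K N (S.vt u) := fun u => by
    rw [collapse_vt]
    exact S.extVt_ne K N _ (cVal_ne hnl u)
  simp only [unit, h, LinearMap.sum_apply, opOld_apply, Finset.sum_smul]
  exact Prod.ext (by simp [Prod.fst_sum]) (by simp [Prod.snd_sum])

theorem ext_unit (n : N) (hn : S.unit • n = n) :
    (S.ext K N hreg).unit ((n, 0) : ExtSpace E v N) = (n, 0) := by
  rw [← collapse_unit _ hreg hnl, LinearMap.add_apply, ext_collapse_unit, hn]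
  have h : (S.ext K N hreg).vt v = S.opV K N := S.extVt_v K N
  rw [h]
  exact Prod.ext (by simp [opV]) (funext fun f => by simp [opV])
end

variable {K : Type} [Field K] {E : FinGraph} {v : E.V}
  (hreg : E.IsRegular v) (hnl : ∀ e : E.E, E.s e = v → E.r e ≠ v)
  (N : ModuleCat.{0} (LeavittPathAlgebra K (E.collapse v hnl)))

/-- The Leavitt `E`-family of operators on `ExtSpace E v N` induced by the module `N`. -/
abbrev extCanon : LeavittFamily E (Module.End K (ExtSpace E v N)) :=
  (canon K (E.collapse v hnl)).ext K N hreg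

/-- The `L_K(E)`-module induced by `N`: the nondegenerate part of `ExtSpace E v N`, namely
`N × ∏ f, r(f) N`. -/
abbrev extObj : ModuleCat.{0} (LeavittPathAlgebra K E) :=
  (extCanon hreg hnl N).cornerObj K (ExtSpace E v N)

/-- The inclusion of `p` times the induced module into `ExtSpace E v N`. Its image is `N × 0`. -/
def extIncl : fObj hreg hnl (extObj hreg hnl N) →+ ExtSpace E v N :=
  ((extCanon hreg hnl N).incl K (ExtSpace E v N)).comp (fIncl hreg hnl (extObj hreg hnl N))

theorem extIncl_injective : Function.Injective (extIncl hreg hnl N) :=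
  (incl_injective _ _ _).comp (incl_injective _ _ _)

/-- The idempotent `p = 1 - v` acts on the induced module as projection to the first factor. -/
theorem incl_unit_smul (x : extObj hreg hnl N) :
    (extCanon hreg hnl N).incl K (ExtSpace E v N)
      ((collapseCanon (K := K) hreg hnl).unit • x) =
      (((extCanon hreg hnl N).incl K (ExtSpace E v N) x).1, 0) := by
  have h := ext_collapse_unit hreg (canon K (E.collapse v hnl)) K N
    ((extCanon hreg hnl N).incl K (ExtSpace E v N) x)
  rw [canon_unit, one_smul] at h
  rw [← h]
  simp [unit, Finset.sum_smul]

theorem extIncl_snd (y : fObj hreg hnl (extObj hreg hnl N)) : (extIncl hreg hnl N y).2 = 0 := by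
  have h := incl_mem _ _ _ y
  have hp := incl_unit_smul hreg hnl N (fIncl hreg hnl _ y)
  rw [h] at hp
  exact congrArg Prod.snd hp

/-- The map from `N` to `p` times the induced module, `n ↦ (n, 0)`. -/
def toExt : N →+ fObj hreg hnl (extObj hreg hnl N) :=
  (fProj hreg hnl (extObj hreg hnl N)).comp (((extCanon hreg hnl N).ofCorner K _).comp
    (AddMonoidHom.mk' (fun n => (⟨(n, 0), ext_unit hreg _ K N n (by
      rw [canon_unit, one_smul])⟩ : (extCanon hreg hnl N).corner K (ExtSpace E v N)))
      (fun a b => Subtype.ext (by simp))))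

@[simp] theorem extIncl_toExt (n : N) : extIncl hreg hnl N (toExt hreg hnl N n) = (n, 0) :=
  incl_unit_smul hreg hnl N _

theorem toExt_smul (a : LeavittPathAlgebra K (E.collapse v hnl)) (n : N) :
    toExt hreg hnl N (a • n) = a • toExt hreg hnl N n := by
  refine linear_of_gens _ ?_ ?_ ?_ ?_ a n
  · intro k n
    apply extIncl_injective
    have h : extIncl hreg hnl N (algebraMap K (LeavittPathAlgebra K (E.collapse v hnl)) k •
        toExt hreg hnl N n) = k • extIncl hreg hnl N (toExt hreg hnl N n) := by
      simp only [extIncl, AddMonoidHom.comp_apply, incl_algebraMap]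
      rw [← algebraMap_smul (LeavittPathAlgebra K E) k, incl_algebraMap]
    rw [h, extIncl_toExt, extIncl_toExt, algebraMap_smul]
    simp
  · intro u n
    apply extIncl_injective
    have h : (extCanon hreg hnl N).vt (cVal hnl u) = opOld K N ((canon K _).vt u) :=
      extVt_ne _ _ _ _ (cVal_ne hnl u)
    have h' : extIncl hreg hnl N ((canon K _).vt u • toExt hreg hnl N n) =
      (extCanon hreg hnl N).vt (cVal hnl u) (extIncl hreg hnl N (toExt hreg hnl N n)) := by
      simp [extIncl]
    rw [h', h]
    simp
  · intro e n
    apply extIncl_injective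
    induction e using collapse_edge_cases with
    | h1 e =>
      have h : (extCanon hreg hnl N).ed e.1 = opOld K N ((canon K _).ed (cOrd hnl e)) :=
        extEd_ord _ _ _ _
      have h' : extIncl hreg hnl N ((canon K _).ed (cOrd hnl e) • toExt hreg hnl N n) =
        (extCanon hreg hnl N).ed e.1 (extIncl hreg hnl N (toExt hreg hnl N n)) := by
        simp [extIncl]
      rw [h', h]
      simp
    | h2 e f =>
      have h1 : (extCanon hreg hnl N).ed e.1 = (canon K _).opIn K N e := extEd_in _ _ _ _
      have h2 : (extCanon hreg hnl N).ed f.1 = (canon K _).opOut K N f := extEd_out _ _ _ _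
      have h' : extIncl hreg hnl N ((canon K _).ed (cPair hnl e f) • toExt hreg hnl N n) =
        (extCanon hreg hnl N).ed e.1 ((extCanon hreg hnl N).ed f.1
          (extIncl hreg hnl N (toExt hreg hnl N n))) := by
        simp [extIncl, mul_smul]
      rw [h', h1, h2]
      simp [opIn, opOut, ← mul_smul, ed_mul_vt_outR]
  · intro e n
    apply extIncl_injective
    induction e using collapse_edge_cases with
    | h1 e =>
      have h : (extCanon hreg hnl N).gh e.1 = opOld K N ((canon K _).gh (cOrd hnl e)) :=
        extGh_ord _ _ _ _
      have h' : extIncl hreg hnl N ((canon K _).gh (cOrd hnl e) • toExt hreg hnl N n) =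
        (extCanon hreg hnl N).gh e.1 (extIncl hreg hnl N (toExt hreg hnl N n)) := by
        simp [extIncl]
      rw [h', h]
      simp
    | h2 e f =>
      have h1 : (extCanon hreg hnl N).gh e.1 = (canon K _).opInGh K N e := extGh_in _ _ _ _
      have h2 : (extCanon hreg hnl N).gh f.1 = (canon K _).opOutGh K N f := extGh_out _ _ _ _
      have h' : extIncl hreg hnl N ((canon K _).gh (cPair hnl e f) • toExt hreg hnl N n) =
        (extCanon hreg hnl N).gh f.1 ((extCanon hreg hnl N).gh e.1
          (extIncl hreg hnl N (toExt hreg hnl N n))) := by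
        simp [extIncl, mul_smul]
      rw [h', h1, h2]
      simp [opInGh, opOutGh, ← mul_smul, vt_outR_mul_gh]

theorem toExt_bijective : Function.Bijective (toExt hreg hnl N) := by
  constructor
  · intro a b hab
    simpa using congrArg (extIncl hreg hnl N) hab
  · intro y
    refine ⟨(extIncl hreg hnl N y).1, extIncl_injective hreg hnl N ?_⟩
    rw [extIncl_toExt]
    exact Prod.ext rfl (extIncl_snd hreg hnl N y).symm

/-- `N` is isomorphic to `p` times the module it induces. -/
noncomputable def toExtEquiv :
    N ≃ₗ[LeavittPathAlgebra K (E.collapse v hnl)] fObj hreg hnl (extObj hreg hnl N) :=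
  LinearEquiv.ofBijective { toExt hreg hnl N with map_smul' := toExt_smul hreg hnl N }
    (toExt_bijective hreg hnl N)

instance : (collapseFunctor (K := K) hreg hnl).EssSurj where
  mem_essImage N := ⟨extObj hreg hnl N, ⟨(toExtEquiv hreg hnl N).toModuleIso.symm⟩⟩

instance : (collapseFunctor (K := K) hreg hnl).IsEquivalence where

end LeavittFamily

/-- Collapsing at a regular vertex which is not the base of a loop
preserves Morita equivalence of Leavitt path algebras. -/
theorem collapse_moritaEquivalent (K : Type) [Field K] (E : FinGraph) (v : E.V)
    (hreg : E.IsRegular v) (hnl : ∀ e : E.E, E.s e = v → E.r e ≠ v) :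
    MoritaEquivalent (LeavittPathAlgebra K E) (LeavittPathAlgebra K (E.collapse v hnl)) := by
  exact ⟨(LeavittFamily.collapseFunctor hreg hnl).asEquivalence⟩
end

section
/- Let K be any field and let E be a finite graph. If v ∈ E^0 is a source vertex which is not isolated (i.e., v emits at least one edge), then L_K(E) is Morita equivalent to L_K(E_{\v}), where E_{\v} is the source elimination graph obtained from E by deleting v and all edges emitted by v. -/
open CategoryTheory

namespace LeavittPathAlgebra

/-! ### Relations between the generators -/

section Basic

variable {K : Type} [Field K] {G : FinGraph}

theorem vert_mul_vert (u w : G.V) :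
    vert K G u * vert K G w = if u = w then vert K G u else 0 := by
  have h := RingQuot.mkAlgHom_rel K (LeavittRel.vertMul (K := K) u w)
  rw [map_mul] at h
  rw [vert, vert, h]
  split_ifs <;> simp

theorem vert_mul_edge (e : G.E) : vert K G (G.s e) * edge K G e = edge K G e := by
  have h := RingQuot.mkAlgHom_rel K (LeavittRel.edgeLeft (K := K) e)
  rwa [map_mul] at h

theorem edge_mul_vert (e : G.E) : edge K G e * vert K G (G.r e) = edge K G e := by
  have h := RingQuot.mkAlgHom_rel K (LeavittRel.edgeRight (K := K) e)
  rwa [map_mul] at h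

theorem vert_mul_ghost (e : G.E) : vert K G (G.r e) * ghost K G e = ghost K G e := by
  have h := RingQuot.mkAlgHom_rel K (LeavittRel.ghostLeft (K := K) e)
  rwa [map_mul] at h

theorem ghost_mul_vert (e : G.E) : ghost K G e * vert K G (G.s e) = ghost K G e := by
  have h := RingQuot.mkAlgHom_rel K (LeavittRel.ghostRight (K := K) e)
  rwa [map_mul] at h

theorem ghost_mul_edge (e f : G.E) :
    ghost K G e * edge K G f = if e = f then vert K G (G.r e) else 0 := by
  have h := RingQuot.mkAlgHom_rel K (LeavittRel.ghostEdge (K := K) e f)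
  rw [map_mul] at h
  rw [ghost, edge, h]
  split_ifs <;> simp [vert]

theorem vert_eq_sum (u : G.V) (hu : G.IsRegular u) :
    vert K G u = ∑ e ∈ Finset.univ.filter (fun e : G.E => G.s e = u),
      edge K G e * ghost K G e := by
  have h := RingQuot.mkAlgHom_rel K (LeavittRel.cuntzKrieger (K := K) u hu)
  rw [map_sum] at h
  simp only [map_mul] at h
  exact h

theorem one_eq_sum : (1 : LeavittPathAlgebra K G) = ∑ u : G.V, vert K G u := by
  have h := RingQuot.mkAlgHom_rel K (LeavittRel.unit (K := K) (G := G))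
  rwa [map_sum, map_one] at h

theorem vert_mul_edge_of_ne {u : G.V} {e : G.E} (h : u ≠ G.s e) :
    vert K G u * edge K G e = 0 := by
  rw [← vert_mul_edge, ← mul_assoc, vert_mul_vert, if_neg h, zero_mul]

theorem edge_mul_vert_of_ne {u : G.V} {e : G.E} (h : G.r e ≠ u) :
    edge K G e * vert K G u = 0 := by
  rw [← edge_mul_vert, mul_assoc, vert_mul_vert, if_neg h, mul_zero]

theorem vert_mul_ghost_of_ne {u : G.V} {e : G.E} (h : u ≠ G.r e) :
    vert K G u * ghost K G e = 0 := by
  rw [← vert_mul_ghost, ← mul_assoc, vert_mul_vert, if_neg h, zero_mul]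

theorem ghost_mul_vert_of_ne {u : G.V} {e : G.E} (h : G.s e ≠ u) :
    ghost K G e * vert K G u = 0 := by
  rw [← ghost_mul_vert, mul_assoc, vert_mul_vert, if_neg h, mul_zero]

theorem edge_mul_edge_of_ne {e f : G.E} (h : G.r e ≠ G.s f) :
    edge K G e * edge K G f = 0 := by
  rw [← vert_mul_edge f, ← mul_assoc, edge_mul_vert_of_ne h, zero_mul]

theorem ghost_mul_ghost_of_ne {e f : G.E} (h : G.s e ≠ G.r f) :
    ghost K G e * ghost K G f = 0 := by
  rw [← vert_mul_ghost f, ← mul_assoc, ghost_mul_vert_of_ne h, zero_mul]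

/-- An additive map between modules over a Leavitt path algebra is linear as soon as it
commutes with the scalars from `K` and with all generators. -/
theorem map_smul_of_generators {M N : Type*} [AddCommGroup M] [AddCommGroup N]
    [Module (LeavittPathAlgebra K G) M] [Module (LeavittPathAlgebra K G) N] (f : M →+ N)
    (hK : ∀ (k : K) (m : M), f (algebraMap K (LeavittPathAlgebra K G) k • m) =
      algebraMap K (LeavittPathAlgebra K G) k • f m)
    (hv : ∀ u m, f (vert K G u • m) = vert K G u • f m)
    (he : ∀ e m, f (edge K G e • m) = edge K G e • f m)
    (hg : ∀ e m, f (ghost K G e • m) = ghost K G e • f m)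
    (a : LeavittPathAlgebra K G) (m : M) : f (a • m) = a • f m := by
  obtain ⟨a, rfl⟩ := RingQuot.mkAlgHom_surjective K (LeavittRel K G) a
  induction a using FreeAlgebra.induction generalizing m with
  | grade0 k => rw [AlgHom.commutes]; exact hK k m
  | grade1 x =>
    cases x with
    | vert u => exact hv u m
    | edge e => exact he e m
    | ghost e => exact hg e m
  | mul a b iha ihb => rw [map_mul, mul_smul, iha, ihb, mul_smul]
  | add a b iha ihb => rw [map_add, add_smul, map_add, iha, ihb, add_smul]

end Basic

/-! ### From `L_K(E)`-modules to modules over the source elimination -/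

section Corner

variable (K : Type) [Field K] {E : FinGraph} (v : E.V) (hsrc : E.IsSource v)
variable (M : Type) [AddCommGroup M] [Module (LeavittPathAlgebra K E) M]
  [Module K M] [IsScalarTower K (LeavittPathAlgebra K E) M]

/-- The subspace `(1 - v) M` of an `L_K(E)`-module `M`, presented as the kernel of `v`. -/
def corner : Submodule K M :=
  LinearMap.ker (Algebra.lsmul K K M (vert K E v))

variable {M} in
theorem mem_corner {m : M} : m ∈ corner K v M ↔ vert K E v • m = 0 := Iff.rfl

variable {K v M} in
theorem smul_mem_corner {a : LeavittPathAlgebra K E} (ha : vert K E v * a = 0) (m : M) :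
    a • m ∈ corner K v M := by
  rw [mem_corner, smul_smul, ha, zero_smul]

variable {K v} in
/-- Multiplication by an element `a` with `v * a = 0`, as an operator on `(1 - v) M`. -/
def cornerOp (a : LeavittPathAlgebra K E) (ha : vert K E v * a = 0) :
    Module.End K (corner K v M) :=
  (Algebra.lsmul K K M a).restrict fun m _ => smul_mem_corner ha m

/-- The operators on `(1 - v) M` by which the generators of `L_K(E \ v)` act. -/
def cornerGen : LPAGen (E.sourceElim v hsrc) → Module.End K (corner K v M)
  | .vert u => cornerOp M (vert K E u.1) (by rw [vert_mul_vert, if_neg u.2.symm])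
  | .edge e => cornerOp M (edge K E e.1) (vert_mul_edge_of_ne e.2.symm)
  | .ghost e => cornerOp M (ghost K E e.1) (vert_mul_ghost_of_ne (hsrc e.1).symm)

theorem cornerGen_rel {a b} (h : LeavittRel K (E.sourceElim v hsrc) a b) :
    FreeAlgebra.lift K (cornerGen K v hsrc M) a = FreeAlgebra.lift K (cornerGen K v hsrc M) b := by
  induction h with
  | vertMul u w =>
    ext m
    rw [map_mul, FreeAlgebra.lift_ι_apply, FreeAlgebra.lift_ι_apply]
    change vert K E u.1 • vert K E w.1 • m.1 = _
    rw [smul_smul, vert_mul_vert]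
    by_cases h : u = w
    · rw [if_pos h, if_pos (congrArg Subtype.val h), FreeAlgebra.lift_ι_apply]; rfl
    · rw [if_neg h, if_neg (fun h' => h (Subtype.ext h')), map_zero, zero_smul]; rfl
  | edgeLeft e =>
    ext m
    rw [map_mul, FreeAlgebra.lift_ι_apply, FreeAlgebra.lift_ι_apply]
    change vert K E (E.s e.1) • edge K E e.1 • m.1 = edge K E e.1 • m.1
    rw [smul_smul, vert_mul_edge]
  | edgeRight e =>
    ext m
    rw [map_mul, FreeAlgebra.lift_ι_apply, FreeAlgebra.lift_ι_apply]
    change edge K E e.1 • vert K E (E.r e.1) • m.1 = edge K E e.1 • m.1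
    rw [smul_smul, edge_mul_vert]
  | ghostLeft e =>
    ext m
    rw [map_mul, FreeAlgebra.lift_ι_apply, FreeAlgebra.lift_ι_apply]
    change vert K E (E.r e.1) • ghost K E e.1 • m.1 = ghost K E e.1 • m.1
    rw [smul_smul, vert_mul_ghost]
  | ghostRight e =>
    ext m
    rw [map_mul, FreeAlgebra.lift_ι_apply, FreeAlgebra.lift_ι_apply]
    change ghost K E e.1 • vert K E (E.s e.1) • m.1 = ghost K E e.1 • m.1
    rw [smul_smul, ghost_mul_vert]
  | ghostEdge e f =>
    ext m
    rw [map_mul, FreeAlgebra.lift_ι_apply, FreeAlgebra.lift_ι_apply]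
    change ghost K E e.1 • edge K E f.1 • m.1 = _
    rw [smul_smul, ghost_mul_edge]
    by_cases h : e = f
    · rw [if_pos h, if_pos (congrArg Subtype.val h), FreeAlgebra.lift_ι_apply]; rfl
    · rw [if_neg h, if_neg (fun h' => h (Subtype.ext h')), map_zero, zero_smul]; rfl
  | cuntzKrieger u hu =>
    ext m
    have hu' : E.IsRegular u.1 := by
      obtain ⟨e, he⟩ := hu
      exact ⟨e.1, congrArg Subtype.val he⟩
    simp only [map_sum, map_mul, FreeAlgebra.lift_ι_apply, LinearMap.sum_apply,
      AddSubmonoidClass.coe_finsetSum]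
    change vert K E u.1 • m.1 = ∑ e ∈ Finset.univ.filter (fun e : (E.sourceElim v hsrc).E => (E.sourceElim v hsrc).s e = u),
      edge K E e.1 • ghost K E e.1 • m.1
    rw [vert_eq_sum _ hu', Finset.sum_smul]
    symm
    refine Finset.sum_bij (fun e _ => e.1) ?_ (fun _ _ _ _ h => Subtype.ext h) ?_ ?_
    · intro e he
      simp only [Finset.mem_filter, Finset.mem_univ, true_and] at he ⊢
      exact congrArg Subtype.val he
    · intro e he
      simp only [Finset.mem_filter, Finset.mem_univ, true_and] at he
      exact ⟨⟨e, fun h => u.2 (he.symm.trans h)⟩,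
        Finset.mem_filter.2 ⟨Finset.mem_univ _, Subtype.ext he⟩, rfl⟩
    · intro e _
      rw [mul_smul]
  | unit =>
    ext m
    simp only [map_sum, map_one, FreeAlgebra.lift_ι_apply, LinearMap.sum_apply,
      AddSubmonoidClass.coe_finsetSum]
    change m.1 = ∑ u : {u : E.V // u ≠ v}, vert K E u.1 • m.1
    conv_lhs => rw [← one_smul (LeavittPathAlgebra K E) m.1, one_eq_sum, Finset.sum_smul]
    rw [← Finset.add_sum_erase _ _ (Finset.mem_univ v), (mem_corner K v).1 m.2, zero_add]
    exact (Finset.sum_subtype _ (by simp) _)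

/-- The action of `L_K(E \ v)` on `(1 - v) M`. -/
def cornerAction :
    LeavittPathAlgebra K (E.sourceElim v hsrc) →ₐ[K] Module.End K (corner K v M) :=
  RingQuot.liftAlgHom K ⟨FreeAlgebra.lift K (cornerGen K v hsrc M),
    fun _ _ h => cornerGen_rel K v hsrc M h⟩

/-- `(1 - v) M` regarded as a module over `L_K(E \ v)`. -/
abbrev CornerModule (_ : E.IsSource v) : Type := corner K v M

instance : Module (LeavittPathAlgebra K (E.sourceElim v hsrc)) (CornerModule K v M hsrc) :=
  Module.compHom _ (cornerAction K v hsrc M).toRingHom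

variable {K v hsrc M}

theorem cornerAction_mk (x) (m : corner K v M) :
    cornerAction K v hsrc M (RingQuot.mkAlgHom K _ (FreeAlgebra.ι K x)) m =
      cornerGen K v hsrc M x m := by
  rw [cornerAction, RingQuot.liftAlgHom_mkAlgHom_apply, FreeAlgebra.lift_ι_apply]

theorem coe_vert_smul (u) (m : CornerModule K v M hsrc) :
    ((vert K (E.sourceElim v hsrc) u • m : CornerModule K v M hsrc) : M) =
      vert K E u.1 • (m : M) :=
  congrArg Subtype.val (cornerAction_mk _ m)

theorem coe_edge_smul (e) (m : CornerModule K v M hsrc) :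
    ((edge K (E.sourceElim v hsrc) e • m : CornerModule K v M hsrc) : M) =
      edge K E e.1 • (m : M) :=
  congrArg Subtype.val (cornerAction_mk _ m)

theorem coe_ghost_smul (e) (m : CornerModule K v M hsrc) :
    ((ghost K (E.sourceElim v hsrc) e • m : CornerModule K v M hsrc) : M) =
      ghost K E e.1 • (m : M) :=
  congrArg Subtype.val (cornerAction_mk _ m)

theorem coe_algebraMap_smul (k : K) (m : CornerModule K v M hsrc) :
    ((algebraMap K (LeavittPathAlgebra K (E.sourceElim v hsrc)) k • m :
      CornerModule K v M hsrc) : M) = algebraMap K (LeavittPathAlgebra K E) k • (m : M) := by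
  have : cornerAction K v hsrc M (algebraMap K _ k) m = k • m := by
    rw [AlgHom.commutes]; rfl
  rw [algebraMap_smul (LeavittPathAlgebra K E) k (m : M)]
  exact congrArg Subtype.val this

end Corner

end LeavittPathAlgebra

namespace LeavittPathAlgebra

/-! ### Full faithfulness of the corner construction -/

section Extension

variable {K : Type} [Field K] {E : FinGraph} {v : E.V} {hsrc : E.IsSource v}
variable {M : Type} [AddCommGroup M] [Module (LeavittPathAlgebra K E) M]

theorem decompose (hreg : E.IsRegular v) (m : M) :
    m = (1 - vert K E v) • m + ∑ e ∈ Finset.univ.filter (fun e : E.E => E.s e = v),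
      edge K E e • ghost K E e • m := by
  simp only [smul_smul]
  rw [← Finset.sum_smul, ← vert_eq_sum _ hreg, ← add_smul, sub_add_cancel, one_smul]

variable [Module K M] [IsScalarTower K (LeavittPathAlgebra K E) M]
variable {N : Type} [AddCommGroup N] [Module (LeavittPathAlgebra K E) N]
  [Module K N] [IsScalarTower K (LeavittPathAlgebra K E) N]

variable (K v hsrc M) in
/-- Left multiplication by `a`, where `v * a = 0`, as a map `M → (1 - v) M`. -/
def toCorner (a : LeavittPathAlgebra K E) (ha : vert K E v * a = 0) :
    M →+ CornerModule K v M hsrc where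
  toFun m := ⟨a • m, smul_mem_corner ha m⟩
  map_zero' := Subtype.ext (smul_zero a)
  map_add' m n := Subtype.ext (smul_add a m n)

theorem vert_mul_one_sub : vert K E v * (1 - vert K E v) = 0 := by
  rw [mul_sub, mul_one, vert_mul_vert, if_pos rfl, sub_self]

variable (hsrc) in
/-- Since `1 = (1 - v) + ∑ e e*`, the sum running over the edges `e` emitted by `v`, the only
candidate for an extension of `g : (1 - v) M → (1 - v) N` to an `L_K(E)`-linear map `M → N` is
`m ↦ g ((1 - v) m) + ∑ e (g (e* m))`. -/
def extendCorner
    (g : CornerModule K v M hsrc →ₗ[LeavittPathAlgebra K (E.sourceElim v hsrc)]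
      CornerModule K v N hsrc) : M →+ N where
  toFun m := (g (toCorner K v hsrc M (1 - vert K E v) vert_mul_one_sub m) : N) +
    ∑ e ∈ Finset.univ.filter (fun e : E.E => E.s e = v),
      edge K E e •
        (g (toCorner K v hsrc M (ghost K E e) (vert_mul_ghost_of_ne (hsrc e).symm) m) : N)
  map_zero' := by simp
  map_add' m n := by
    simp only [map_add, Submodule.coe_add, smul_add, Finset.sum_add_distrib]
    abel

variable (g : CornerModule K v M hsrc →ₗ[LeavittPathAlgebra K (E.sourceElim v hsrc)]
      CornerModule K v N hsrc)

theorem extendCorner_apply (m : M) : extendCorner hsrc g m =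
    (g (toCorner K v hsrc M (1 - vert K E v) vert_mul_one_sub m) : N) +
    ∑ e ∈ Finset.univ.filter (fun e : E.E => E.s e = v),
      edge K E e •
        (g (toCorner K v hsrc M (ghost K E e) (vert_mul_ghost_of_ne (hsrc e).symm) m) : N) :=
  rfl

theorem extendCorner_coe (m : CornerModule K v M hsrc) :
    extendCorner hsrc g (m : M) = (g m : N) := by
  have hm : vert K E v • (m : M) = 0 := m.2
  rw [extendCorner_apply, Finset.sum_eq_zero, add_zero]
  · congr 2
    ext
    change (1 - vert K E v) • (m : M) = m
    rw [sub_smul, one_smul, hm, sub_zero]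
  · intro e he
    have he' : E.s e = v := (Finset.mem_filter.1 he).2
    have : toCorner K v hsrc M (ghost K E e) (vert_mul_ghost_of_ne (hsrc e).symm) m = 0 := by
      ext
      change ghost K E e • (m : M) = 0
      rw [← ghost_mul_vert, he', mul_smul, hm, smul_zero]
    rw [this, map_zero, Submodule.coe_zero, smul_zero]

/-- On an element of `v M` only the second summand of the extension survives. -/
theorem extendCorner_vert_smul (m : M) :
    extendCorner hsrc g (vert K E v • m) = ∑ e ∈ Finset.univ.filter (fun e : E.E => E.s e = v),
      edge K E e •
        (g (toCorner K v hsrc M (ghost K E e) (vert_mul_ghost_of_ne (hsrc e).symm) m) : N) := by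
  have h0 : toCorner K v hsrc M (1 - vert K E v) vert_mul_one_sub (vert K E v • m) = 0 := by
    ext
    change (1 - vert K E v) • vert K E v • m = 0
    rw [smul_smul, sub_mul, one_mul, vert_mul_vert, if_pos rfl, sub_self, zero_smul]
  rw [extendCorner_apply, h0, map_zero, Submodule.coe_zero, zero_add]
  refine Finset.sum_congr rfl fun e he => ?_
  have he' : E.s e = v := (Finset.mem_filter.1 he).2
  congr 3
  ext
  change ghost K E e • vert K E v • m = ghost K E e • m
  rw [smul_smul, ← he', ghost_mul_vert]

/-- Any `a` with `v a = 0` and `a v = 0` that acts on corners through `b ∈ L_K(E \ v)` commutes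
with the extension. -/
theorem extendCorner_smul_of_corner (a : LeavittPathAlgebra K E)
    (b : LeavittPathAlgebra K (E.sourceElim v hsrc))
    (hva : vert K E v * a = 0) (hav : a * vert K E v = 0)
    (hM : ∀ m : CornerModule K v M hsrc, ((b • m : CornerModule K v M hsrc) : M) = a • (m : M))
    (hN : ∀ m : CornerModule K v N hsrc, ((b • m : CornerModule K v N hsrc) : N) = a • (m : N))
    (hae : ∀ e, E.s e = v → a * edge K E e = 0) (m : M) :
    extendCorner hsrc g (a • m) = a • extendCorner hsrc g m := by
  have h1 := extendCorner_coe g (toCorner K v hsrc M a hva m)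
  have h2 : toCorner K v hsrc M a hva m =
      b • toCorner K v hsrc M (1 - vert K E v) vert_mul_one_sub m := by
    ext
    rw [hM]
    change a • m = a • (1 - vert K E v) • m
    rw [smul_smul, mul_sub, mul_one, hav, sub_zero]
  rw [h2, map_smul, hN, ← h2] at h1
  rw [extendCorner_apply g m, smul_add, Finset.smul_sum, Finset.sum_eq_zero, add_zero]
  · exact h1
  · intro e he
    rw [smul_smul, hae e (Finset.mem_filter.1 he).2, zero_smul]

theorem extendCorner_smul (a : LeavittPathAlgebra K E) (m : M) :
    extendCorner hsrc g (a • m) = a • extendCorner hsrc g m := by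
  refine map_smul_of_generators (extendCorner hsrc g) ?_ ?_ ?_ ?_ a m
  · intro k m
    have key : ∀ (c : LeavittPathAlgebra K E) (hc : vert K E v * c = 0),
        (g (toCorner K v hsrc M c hc (algebraMap K (LeavittPathAlgebra K E) k • m)) : N) =
          algebraMap K (LeavittPathAlgebra K E) k • (g (toCorner K v hsrc M c hc m) : N) := by
      intro c hc
      rw [← coe_algebraMap_smul, ← map_smul]
      congr 2
      ext
      rw [coe_algebraMap_smul]
      change c • algebraMap K (LeavittPathAlgebra K E) k • m =
        algebraMap K (LeavittPathAlgebra K E) k • c • m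
      rw [smul_smul, smul_smul, Algebra.commutes]
    rw [extendCorner_apply, extendCorner_apply, smul_add, Finset.smul_sum, key]
    congr 1
    refine Finset.sum_congr rfl fun e _ => ?_
    rw [key, smul_smul, smul_smul, Algebra.commutes]
  · intro u m
    by_cases hu : u = v
    · subst hu
      rw [extendCorner_vert_smul, extendCorner_apply, smul_add, Finset.smul_sum,
        (mem_corner K u).1 (Subtype.property _), zero_add]
      refine Finset.sum_congr rfl fun e he => ?_
      have hve : vert K E u * edge K E e = edge K E e := by
        rw [← (Finset.mem_filter.1 he).2, vert_mul_edge]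
      rw [smul_smul, hve]
    · refine extendCorner_smul_of_corner g _ (vert K (E.sourceElim v hsrc) ⟨u, hu⟩) ?_ ?_
        (coe_vert_smul _) (coe_vert_smul _) ?_ m
      · rw [vert_mul_vert, if_neg (Ne.symm hu)]
      · rw [vert_mul_vert, if_neg hu]
      · rintro e rfl
        exact vert_mul_edge_of_ne hu
  · intro e m
    obtain ⟨w, hw⟩ : ∃ w : (E.sourceElim v hsrc).V, w.1 = E.r e := ⟨⟨E.r e, hsrc e⟩, rfl⟩
    by_cases he : E.s e = v
    · have h1 : edge K E e • m = vert K E v • edge K E e • m := by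
        rw [smul_smul, ← he, vert_mul_edge]
      rw [h1, extendCorner_vert_smul, extendCorner_apply, smul_add, Finset.smul_sum,
        Finset.sum_eq_single e, Finset.sum_eq_zero, add_zero]
      · -- both sides are `e` applied to the value of `g` at `r(e) m` and at `(1 - v) m`
        have h2 : toCorner K v hsrc M (ghost K E e) (vert_mul_ghost_of_ne (hsrc e).symm)
            (edge K E e • m) = vert K (E.sourceElim v hsrc) w •
              toCorner K v hsrc M (1 - vert K E v) vert_mul_one_sub m := by
          ext
          rw [coe_vert_smul, hw]
          change ghost K E e • edge K E e • m = vert K E (E.r e) • (1 - vert K E v) • m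
          rw [smul_smul, smul_smul, ghost_mul_edge, if_pos rfl, mul_sub, mul_one, vert_mul_vert,
            if_neg (hsrc e), sub_zero]
        rw [h2, map_smul, coe_vert_smul, hw, smul_smul, edge_mul_vert]
      · intro f hf
        rw [smul_smul, edge_mul_edge_of_ne, zero_smul]
        rw [(Finset.mem_filter.1 hf).2]
        exact hsrc e
      · intro f _ hfe
        have h3 : toCorner K v hsrc M (ghost K E f) (vert_mul_ghost_of_ne (hsrc f).symm)
            (edge K E e • m) = 0 := by
          ext
          change ghost K E f • edge K E e • m = 0
          rw [smul_smul, ghost_mul_edge, if_neg hfe, zero_smul]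
        rw [h3, map_zero, Submodule.coe_zero, smul_zero]
      · intro h
        exact (h (Finset.mem_filter.2 ⟨Finset.mem_univ _, he⟩)).elim
    · refine extendCorner_smul_of_corner g _ (edge K (E.sourceElim v hsrc) ⟨e, he⟩) ?_ ?_
        (coe_edge_smul _) (coe_edge_smul _) ?_ m
      · exact vert_mul_edge_of_ne (Ne.symm he)
      · exact edge_mul_vert_of_ne (hsrc e)
      · rintro f rfl
        exact edge_mul_edge_of_ne (hsrc e)
  · intro e m
    obtain ⟨w, hw⟩ : ∃ w : (E.sourceElim v hsrc).V, w.1 = E.r e := ⟨⟨E.r e, hsrc e⟩, rfl⟩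
    by_cases he : E.s e = v
    · have h0 := extendCorner_coe g
        (toCorner K v hsrc M (ghost K E e) (vert_mul_ghost_of_ne (hsrc e).symm) m)
      refine h0.trans ?_
      rw [extendCorner_apply, smul_add, Finset.smul_sum, Finset.sum_eq_single e]
      · have h1 : ∀ n : CornerModule K v N hsrc, ghost K E e • (n : N) = 0 := by
          intro n
          rw [← ghost_mul_vert, he, mul_smul, (mem_corner K v).1 n.2, smul_zero]
        have h2 : ghost K E e * edge K E e = vert K E w.1 := by
          rw [ghost_mul_edge, if_pos rfl, hw]
        rw [h1, zero_add, smul_smul, h2, ← coe_vert_smul (hsrc := hsrc) w, ← map_smul]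
        congr 2
        ext
        rw [coe_vert_smul, hw]
        change ghost K E e • m = vert K E (E.r e) • ghost K E e • m
        rw [smul_smul, vert_mul_ghost]
      · intro f _ hfe
        rw [smul_smul, ghost_mul_edge, if_neg (Ne.symm hfe), zero_smul]
      · intro h
        exact (h (Finset.mem_filter.2 ⟨Finset.mem_univ _, he⟩)).elim
    · refine extendCorner_smul_of_corner g _ (ghost K (E.sourceElim v hsrc) ⟨e, he⟩) ?_ ?_
        (coe_ghost_smul _) (coe_ghost_smul _) ?_ m
      · exact vert_mul_ghost_of_ne (hsrc e).symm
      · exact ghost_mul_vert_of_ne he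
      · intro f hf
        have hef : e ≠ f := fun h => he (h ▸ hf)
        exact (ghost_mul_edge e f).trans (if_neg hef)

/-- The restriction of an `L_K(E)`-linear map `M → N` to `(1 - v) M → (1 - v) N`. -/
def restrictCorner (hsrc : E.IsSource v) (f : M →ₗ[LeavittPathAlgebra K E] N) :
    CornerModule K v M hsrc →ₗ[LeavittPathAlgebra K (E.sourceElim v hsrc)]
      CornerModule K v N hsrc :=
  let f₀ : CornerModule K v M hsrc →+ CornerModule K v N hsrc :=
    { toFun m := ⟨f (m : M), by
        rw [mem_corner, ← map_smul, (mem_corner K v).1 m.2, map_zero]⟩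
      map_zero' := Subtype.ext (map_zero f)
      map_add' m n := Subtype.ext (map_add f (m : M) (n : M)) }
  have hf₀ (m : CornerModule K v M hsrc) : (f₀ m : N) = f (m : M) := rfl
  { f₀ with
    map_smul' := by
      refine map_smul_of_generators f₀ ?_ ?_ ?_ ?_ <;> intro a m <;> ext
      · rw [hf₀, coe_algebraMap_smul, coe_algebraMap_smul, map_smul, hf₀]
      · rw [hf₀, coe_vert_smul, coe_vert_smul, map_smul, hf₀]
      · rw [hf₀, coe_edge_smul, coe_edge_smul, map_smul, hf₀]
      · rw [hf₀, coe_ghost_smul, coe_ghost_smul, map_smul, hf₀] }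

theorem coe_restrictCorner (f : M →ₗ[LeavittPathAlgebra K E] N) (m : CornerModule K v M hsrc) :
    (restrictCorner hsrc f m : N) = f (m : M) := rfl

theorem restrictCorner_injective (hreg : E.IsRegular v) :
    Function.Injective (restrictCorner (K := K) (M := M) (N := N) hsrc) := by
  intro f f' h
  have key (m : CornerModule K v M hsrc) : f (m : M) = f' (m : M) := by
    rw [← coe_restrictCorner, h, coe_restrictCorner]
  ext m
  rw [decompose (K := K) hreg m]
  simp only [map_add, map_sum]
  congr 1
  · exact key (toCorner K v hsrc M _ vert_mul_one_sub m)
  · refine Finset.sum_congr rfl fun e _ => ?_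
    rw [map_smul f (edge K E e), map_smul f' (edge K E e)]
    exact congrArg _ (key (toCorner K v hsrc M (ghost K E e)
      (vert_mul_ghost_of_ne (hsrc e).symm) m))

theorem restrictCorner_surjective :
    Function.Surjective (restrictCorner (K := K) (M := M) (N := N) hsrc) := fun g =>
  ⟨{ extendCorner hsrc g with map_smul' := extendCorner_smul g },
    LinearMap.ext fun m => Subtype.ext (extendCorner_coe g m)⟩

end Extension

end LeavittPathAlgebra

namespace LeavittPathAlgebra

/-! ### Essential surjectivity of the corner construction -/

section Induced

variable (K : Type) [Field K] {E : FinGraph} (v : E.V) (hsrc : E.IsSource v)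

/-- The element of `L_K(E \ v)` given by a vertex of `E`, with `v` sent to `0`. -/
def elimVert (u : E.V) : LeavittPathAlgebra K (E.sourceElim v hsrc) :=
  if h : u = v then 0 else vert K (E.sourceElim v hsrc) ⟨u, h⟩

/-- The element of `L_K(E \ v)` given by an edge of `E`, with edges emitted by `v` sent to `0`. -/
def elimEdge (e : E.E) : LeavittPathAlgebra K (E.sourceElim v hsrc) :=
  if h : E.s e = v then 0 else edge K (E.sourceElim v hsrc) ⟨e, h⟩

/-- The element of `L_K(E \ v)` given by a ghost edge of `E`, with ghosts of edges emitted by `v`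
sent to `0`. -/
def elimGhost (e : E.E) : LeavittPathAlgebra K (E.sourceElim v hsrc) :=
  if h : E.s e = v then 0 else ghost K (E.sourceElim v hsrc) ⟨e, h⟩

theorem elimVert_self : elimVert K v hsrc v = 0 := dif_pos rfl

theorem elimEdge_eq_zero {e : E.E} (h : E.s e = v) : elimEdge K v hsrc e = 0 := dif_pos h

theorem elimGhost_eq_zero {e : E.E} (h : E.s e = v) : elimGhost K v hsrc e = 0 := dif_pos h

theorem elimVert_coe (u : (E.sourceElim v hsrc).V) :
    elimVert K v hsrc u.1 = vert K (E.sourceElim v hsrc) u := dif_neg u.2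

theorem elimEdge_coe (e : (E.sourceElim v hsrc).E) :
    elimEdge K v hsrc e.1 = edge K (E.sourceElim v hsrc) e := dif_neg e.2

theorem elimGhost_coe (e : (E.sourceElim v hsrc).E) :
    elimGhost K v hsrc e.1 = ghost K (E.sourceElim v hsrc) e := dif_neg e.2

variable {v}

theorem exists_coe_vert {u : E.V} (h : u ≠ v) : ∃ w : (E.sourceElim v hsrc).V, w.1 = u :=
  ⟨⟨u, h⟩, rfl⟩

theorem exists_coe_edge {e : E.E} (h : E.s e ≠ v) : ∃ f : (E.sourceElim v hsrc).E, f.1 = e :=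
  ⟨⟨e, h⟩, rfl⟩

variable (v)

theorem elimVert_mul (u w : E.V) : elimVert K v hsrc u * elimVert K v hsrc w =
    if u = w then elimVert K v hsrc u else 0 := by
  by_cases hu : u = v
  · rw [hu, elimVert_self, zero_mul, ite_self]
  by_cases hw : w = v
  · rw [if_neg (by rwa [hw]), hw, elimVert_self, mul_zero]
  obtain ⟨u, rfl⟩ := exists_coe_vert hsrc hu
  obtain ⟨w, rfl⟩ := exists_coe_vert hsrc hw
  rw [elimVert_coe, elimVert_coe, vert_mul_vert]
  exact if_congr Subtype.ext_iff rfl rfl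

theorem elimVert_mul_edge (e : E.E) :
    elimVert K v hsrc (E.s e) * elimEdge K v hsrc e = elimEdge K v hsrc e := by
  by_cases h : E.s e = v
  · rw [elimEdge_eq_zero K v hsrc h, mul_zero]
  obtain ⟨e, rfl⟩ := exists_coe_edge hsrc h
  rw [elimEdge_coe]
  exact (congrArg (· * _) (elimVert_coe K v hsrc _)).trans (vert_mul_edge e)

theorem elimEdge_mul_vert (e : E.E) :
    elimEdge K v hsrc e * elimVert K v hsrc (E.r e) = elimEdge K v hsrc e := by
  by_cases h : E.s e = v
  · rw [elimEdge_eq_zero K v hsrc h, zero_mul]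
  obtain ⟨e, rfl⟩ := exists_coe_edge hsrc h
  rw [elimEdge_coe]
  exact (congrArg (_ * ·) (elimVert_coe K v hsrc ((E.sourceElim v hsrc).r e))).trans
    (edge_mul_vert e)

theorem elimVert_mul_ghost (e : E.E) :
    elimVert K v hsrc (E.r e) * elimGhost K v hsrc e = elimGhost K v hsrc e := by
  by_cases h : E.s e = v
  · rw [elimGhost_eq_zero K v hsrc h, mul_zero]
  obtain ⟨e, rfl⟩ := exists_coe_edge hsrc h
  rw [elimGhost_coe]
  exact (congrArg (· * _) (elimVert_coe K v hsrc ((E.sourceElim v hsrc).r e))).trans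
    (vert_mul_ghost e)

theorem elimGhost_mul_vert (e : E.E) :
    elimGhost K v hsrc e * elimVert K v hsrc (E.s e) = elimGhost K v hsrc e := by
  by_cases h : E.s e = v
  · rw [elimGhost_eq_zero K v hsrc h, zero_mul]
  obtain ⟨e, rfl⟩ := exists_coe_edge hsrc h
  rw [elimGhost_coe]
  exact (congrArg (_ * ·) (elimVert_coe K v hsrc _)).trans (ghost_mul_vert e)

theorem elimGhost_mul_edge {e : E.E} (he : E.s e ≠ v) (f : E.E) :
    elimGhost K v hsrc e * elimEdge K v hsrc f =
      if e = f then elimVert K v hsrc (E.r e) else 0 := by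
  by_cases hf : E.s f = v
  · rw [elimEdge_eq_zero K v hsrc hf, mul_zero, if_neg]
    rintro rfl
    exact he hf
  obtain ⟨e, rfl⟩ := exists_coe_edge hsrc he
  obtain ⟨f, rfl⟩ := exists_coe_edge hsrc hf
  rw [elimEdge_coe, elimGhost_coe, ghost_mul_edge]
  exact if_congr Subtype.ext_iff (elimVert_coe K v hsrc ((E.sourceElim v hsrc).r e)).symm rfl

theorem elimVert_eq_sum {u : E.V} (hu : E.IsRegular u) (huv : u ≠ v) :
    elimVert K v hsrc u = ∑ e ∈ Finset.univ.filter (fun e : E.E => E.s e = u),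
      elimEdge K v hsrc e * elimGhost K v hsrc e := by
  obtain ⟨u, rfl⟩ := exists_coe_vert hsrc huv
  have hu' : (E.sourceElim v hsrc).IsRegular u := by
    obtain ⟨e, he⟩ := hu
    exact ⟨⟨e, fun h => huv (he.symm.trans h)⟩, Subtype.ext he⟩
  rw [elimVert_coe, vert_eq_sum _ hu']
  refine Finset.sum_bij (fun e _ => e.1) ?_ (fun _ _ _ _ h => Subtype.ext h) ?_ ?_
  · intro e he
    simp only [Finset.mem_filter, Finset.mem_univ, true_and] at he ⊢
    exact congrArg Subtype.val he
  · intro e he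
    simp only [Finset.mem_filter, Finset.mem_univ, true_and] at he
    exact ⟨⟨e, fun h => u.2 (he.symm.trans h)⟩,
      Finset.mem_filter.2 ⟨Finset.mem_univ _, Subtype.ext he⟩, rfl⟩
  · intro e _
    rw [elimEdge_coe, elimGhost_coe]

theorem sum_elimVert : ∑ u : E.V, elimVert K v hsrc u = 1 := by
  rw [one_eq_sum, Fintype.sum_eq_add_sum_subtype_ne _ v, elimVert_self, zero_add]
  exact Finset.sum_congr rfl fun u _ => elimVert_coe K v hsrc u

variable (N : Type) [AddCommGroup N] [Module (LeavittPathAlgebra K (E.sourceElim v hsrc)) N]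
  [Module K N] [IsScalarTower K (LeavittPathAlgebra K (E.sourceElim v hsrc)) N]

/-- The product of the spaces `r(e) N` over the edges `e` emitted by `v`, as families indexed by
all edges of `E` that vanish at the edges not emitted by `v`. -/
def fiber : Submodule K (E.E → N) where
  carrier := {x | ∀ e, elimVert K v hsrc (E.r e) • x e = x e ∧ (E.s e ≠ v → x e = 0)}
  zero_mem' e := ⟨smul_zero _, fun _ => rfl⟩
  add_mem' {x y} hx hy e := ⟨by
    rw [Pi.add_apply, smul_add, (hx e).1, (hy e).1], fun h => by
    rw [Pi.add_apply, (hx e).2 h, (hy e).2 h, add_zero]⟩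
  smul_mem' k x hx e := ⟨by
    rw [Pi.smul_apply, smul_algebra_smul_comm, (hx e).1], fun h => by
    rw [Pi.smul_apply, (hx e).2 h, smul_zero]⟩

/-- The map `N → r(e) N`, viewed inside the product `fiber`; it is `0` if `v` does not emit `e`. -/
def toFiber (e : E.E) : N →ₗ[K] fiber K v hsrc N where
  toFun n := ⟨if E.s e = v then Pi.single e (elimVert K v hsrc (E.r e) • n) else 0, by
    split_ifs with h
    · intro f
      obtain rfl | hf := eq_or_ne f e
      · simp only [Pi.single_eq_same, smul_smul, elimVert_mul, if_true, true_and]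
        exact fun h' => absurd h h'
      · simp only [Pi.single_eq_of_ne hf, smul_zero, true_and, implies_true]
    · exact Submodule.zero_mem _⟩
  map_add' m n := by
    ext f
    by_cases h : E.s e = v <;> simp [h, Pi.single_add]
  map_smul' k n := by
    ext f
    by_cases h : E.s e = v
    · simp [h, smul_algebra_smul_comm, ← Pi.single_smul]
    · simp [h]

/-- Evaluation of a family at the edge `e`. -/
def evalFiber (e : E.E) : fiber K v hsrc N →ₗ[K] N :=
  (LinearMap.proj e).comp (fiber K v hsrc N).subtype

/-- The underlying space of the `L_K(E)`-module induced from `N`: the first factor plays the role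
of `(1 - v) M`, the second that of `v M`. -/
abbrev Induced : Type := N × fiber K v hsrc N

/-- The operators on the induced module by which the generators of `L_K(E)` act. -/
def inducedGen : LPAGen E → Module.End K (Induced K v hsrc N)
  | .vert u => LinearMap.prodMap (Algebra.lsmul K K N (elimVert K v hsrc u))
      (if u = v then LinearMap.id else 0)
  | .edge e => ((Algebra.lsmul K K N (elimEdge K v hsrc e)).prod (toFiber K v hsrc N e)).comp
      (LinearMap.fst K _ _)
  | .ghost e => (LinearMap.inl K _ _).comp
      ((Algebra.lsmul K K N (elimGhost K v hsrc e)).coprod (evalFiber K v hsrc N e))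

variable {N}

theorem inducedGen_vert (u : E.V) (p : Induced K v hsrc N) :
    inducedGen K v hsrc N (.vert u) p =
      (elimVert K v hsrc u • p.1, if u = v then p.2 else 0) := by
  by_cases h : u = v <;> simp [inducedGen, h]

theorem inducedGen_edge (e : E.E) (p : Induced K v hsrc N) :
    inducedGen K v hsrc N (.edge e) p =
      (elimEdge K v hsrc e • p.1, toFiber K v hsrc N e p.1) := rfl

theorem inducedGen_ghost (e : E.E) (p : Induced K v hsrc N) :
    inducedGen K v hsrc N (.ghost e) p =
      (elimGhost K v hsrc e • p.1 + p.2.1 e, 0) := rfl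

theorem toFiber_of_ne {e : E.E} (h : E.s e ≠ v) (n : N) : toFiber K v hsrc N e n = 0 :=
  Subtype.ext (if_neg h)

theorem coe_toFiber {e : E.E} (h : E.s e = v) (n : N) : (toFiber K v hsrc N e n : E.E → N) =
    Pi.single e (elimVert K v hsrc (E.r e) • n) := if_pos h

theorem toFiber_vert_smul (e : E.E) (n : N) :
    toFiber K v hsrc N e (elimVert K v hsrc (E.r e) • n) = toFiber K v hsrc N e n := by
  by_cases h : E.s e = v
  · ext1
    rw [coe_toFiber K v hsrc h, coe_toFiber K v hsrc h, smul_smul, elimVert_mul, if_pos rfl]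
  · rw [toFiber_of_ne K v hsrc h, toFiber_of_ne K v hsrc h]

theorem inducedGen_rel {a b} (h : LeavittRel K E a b) :
    FreeAlgebra.lift K (inducedGen K v hsrc N) a =
      FreeAlgebra.lift K (inducedGen K v hsrc N) b := by
  induction h with
  | vertMul u w =>
    refine LinearMap.ext fun p => ?_
    rw [map_mul, FreeAlgebra.lift_ι_apply, FreeAlgebra.lift_ι_apply, Module.End.mul_apply,
      inducedGen_vert, inducedGen_vert, smul_smul, elimVert_mul]
    by_cases h : u = w
    · subst h
      rw [if_pos rfl, if_pos rfl, FreeAlgebra.lift_ι_apply, inducedGen_vert]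
      split_ifs <;> rfl
    · rw [if_neg h, if_neg h, map_zero, zero_smul, LinearMap.zero_apply]
      refine Prod.ext rfl ?_
      by_cases hu : u = v
      · have hw : w ≠ v := fun hw => h (hu.trans hw.symm)
        simp [hu, hw]
      · simp [hu]
  | edgeLeft e =>
    refine LinearMap.ext fun p => ?_
    rw [map_mul, FreeAlgebra.lift_ι_apply, FreeAlgebra.lift_ι_apply, Module.End.mul_apply,
      inducedGen_vert, inducedGen_edge, smul_smul, elimVert_mul_edge]
    refine Prod.ext rfl ?_
    by_cases h : E.s e = v
    · simp [h]
    · simp [h, toFiber_of_ne K v hsrc h]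
  | edgeRight e =>
    refine LinearMap.ext fun p => ?_
    rw [map_mul, FreeAlgebra.lift_ι_apply, FreeAlgebra.lift_ι_apply, Module.End.mul_apply,
      inducedGen_vert, inducedGen_edge, inducedGen_edge, smul_smul, elimEdge_mul_vert,
      toFiber_vert_smul]
  | ghostLeft e =>
    refine LinearMap.ext fun p => ?_
    rw [map_mul, FreeAlgebra.lift_ι_apply, FreeAlgebra.lift_ι_apply, Module.End.mul_apply,
      inducedGen_vert, inducedGen_ghost, smul_add, smul_smul, elimVert_mul_ghost,
      (p.2.2 e).1, ite_self]
  | ghostRight e =>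
    refine LinearMap.ext fun p => ?_
    rw [map_mul, FreeAlgebra.lift_ι_apply, FreeAlgebra.lift_ι_apply, Module.End.mul_apply,
      inducedGen_vert, inducedGen_ghost, inducedGen_ghost, smul_smul, elimGhost_mul_vert]
    by_cases h : E.s e = v
    · rw [if_pos h]
    · rw [if_neg h, (p.2.2 e).2 h]; rfl
  | ghostEdge e f =>
    refine LinearMap.ext fun p => ?_
    have hr : E.r e ≠ v := hsrc e
    rw [map_mul, FreeAlgebra.lift_ι_apply, FreeAlgebra.lift_ι_apply, Module.End.mul_apply,
      inducedGen_edge, inducedGen_ghost, smul_smul]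
    have key : (elimGhost K v hsrc e * elimEdge K v hsrc f) • p.1 +
        (toFiber K v hsrc N f p.1 : E.E → N) e =
          if e = f then elimVert K v hsrc (E.r e) • p.1 else 0 := by
      by_cases he : E.s e = v
      · rw [elimGhost_eq_zero K v hsrc he, zero_mul, zero_smul, zero_add]
        by_cases hef : e = f
        · subst hef
          rw [coe_toFiber K v hsrc he, Pi.single_eq_same, if_pos rfl]
        · rw [if_neg hef]
          by_cases hf : E.s f = v
          · rw [coe_toFiber K v hsrc hf, Pi.single_eq_of_ne hef]
          · rw [toFiber_of_ne K v hsrc hf]; rfl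
      · rw [elimGhost_mul_edge K v hsrc he, ((toFiber K v hsrc N f p.1).2 e).2 he, add_zero,
          ite_smul, zero_smul]
    rw [key]
    by_cases hef : e = f
    · rw [if_pos hef, if_pos hef, FreeAlgebra.lift_ι_apply, inducedGen_vert, if_neg hr]
    · rw [if_neg hef, if_neg hef, map_zero]; rfl
  | cuntzKrieger u hu =>
    refine LinearMap.ext fun p => ?_
    simp only [map_sum, map_mul, FreeAlgebra.lift_ι_apply, LinearMap.sum_apply,
      Module.End.mul_apply, inducedGen_vert, inducedGen_edge, inducedGen_ghost]
    by_cases huv : u = v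
    · subst huv
      refine Prod.ext ?_ ?_
      · rw [Prod.fst_sum, elimVert_self, zero_smul, Finset.sum_eq_zero]
        intro e he
        rw [elimEdge_eq_zero K u hsrc (Finset.mem_filter.1 he).2, zero_smul]
      · rw [Prod.snd_sum, if_pos rfl]
        ext f
        rw [AddSubmonoidClass.coe_finsetSum, Finset.sum_apply]
        by_cases hf : E.s f = u
        · rw [Finset.sum_eq_single f]
          · rw [coe_toFiber K u hsrc hf, Pi.single_eq_same, elimGhost_eq_zero K u hsrc hf,
              zero_smul, zero_add, (p.2.2 f).1]
          · intro e he hef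
            rw [coe_toFiber K u hsrc (Finset.mem_filter.1 he).2, Pi.single_eq_of_ne hef.symm]
          · intro h
            exact (h (Finset.mem_filter.2 ⟨Finset.mem_univ _, hf⟩)).elim
        · rw [(p.2.2 f).2 hf, Finset.sum_eq_zero]
          exact fun e _ => ((toFiber K u hsrc N e _).2 f).2 hf
    · refine Prod.ext ?_ ?_
      · rw [Prod.fst_sum, elimVert_eq_sum K v hsrc hu huv, Finset.sum_smul]
        refine Finset.sum_congr rfl fun e he => ?_
        have he' : E.s e ≠ v := by rwa [(Finset.mem_filter.1 he).2]
        rw [(p.2.2 e).2 he', add_zero, mul_smul]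
      · rw [Prod.snd_sum, if_neg huv, Finset.sum_eq_zero]
        intro e he
        have he' : E.s e ≠ v := by rwa [(Finset.mem_filter.1 he).2]
        exact toFiber_of_ne K v hsrc he' _
  | unit =>
    refine LinearMap.ext fun p => ?_
    simp only [map_sum, map_one, FreeAlgebra.lift_ι_apply, LinearMap.sum_apply, inducedGen_vert,
      Module.End.one_apply]
    refine Prod.ext ?_ ?_
    · rw [Prod.fst_sum, ← Finset.sum_smul, sum_elimVert, one_smul]
    · rw [Prod.snd_sum, Finset.sum_ite_eq' Finset.univ v, if_pos (Finset.mem_univ v)]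

variable (N)

/-- The action of `L_K(E)` on the module induced from `N`. -/
def inducedAction : LeavittPathAlgebra K E →ₐ[K] Module.End K (Induced K v hsrc N) :=
  RingQuot.liftAlgHom K ⟨FreeAlgebra.lift K (inducedGen K v hsrc N),
    fun _ _ h => inducedGen_rel K v hsrc h⟩

theorem inducedAction_mk (x) : inducedAction K v hsrc N (RingQuot.mkAlgHom K _
    (FreeAlgebra.ι K x)) = inducedGen K v hsrc N x := by
  rw [inducedAction, RingQuot.liftAlgHom_mkAlgHom_apply, FreeAlgebra.lift_ι_apply]

instance inducedModule : Module (LeavittPathAlgebra K E) (Induced K v hsrc N) :=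
  Module.compHom _ (inducedAction K v hsrc N).toRingHom

variable {N}

theorem induced_vert_smul (u : E.V) (p : Induced K v hsrc N) :
    vert K E u • p = (elimVert K v hsrc u • p.1, if u = v then p.2 else 0) :=
  (LinearMap.congr_fun (inducedAction_mk K v hsrc N _) p).trans (inducedGen_vert K v hsrc u p)

theorem induced_edge_smul (e : E.E) (p : Induced K v hsrc N) :
    edge K E e • p = (elimEdge K v hsrc e • p.1, toFiber K v hsrc N e p.1) :=
  LinearMap.congr_fun (inducedAction_mk K v hsrc N (.edge e)) p

theorem induced_ghost_smul (e : E.E) (p : Induced K v hsrc N) :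
    ghost K E e • p = (elimGhost K v hsrc e • p.1 + p.2.1 e, 0) :=
  LinearMap.congr_fun (inducedAction_mk K v hsrc N (.ghost e)) p

theorem induced_algebraMap_smul (k : K) (p : Induced K v hsrc N) :
    algebraMap K (LeavittPathAlgebra K E) k • p = k • p :=
  LinearMap.congr_fun ((inducedAction K v hsrc N).commutes k) p

end Induced

end LeavittPathAlgebra

namespace LeavittPathAlgebra

/-! ### The equivalence -/

section Equivalence

open scoped ModuleCat

variable (K : Type) [Field K] {E : FinGraph} (v : E.V) (hsrc : E.IsSource v)

/-- The functor `M ↦ (1 - v) M` from `L_K(E)`-modules to `L_K(E \ v)`-modules. -/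
def cornerFunctor : ModuleCat.{0} (LeavittPathAlgebra K E) ⥤
    ModuleCat.{0} (LeavittPathAlgebra K (E.sourceElim v hsrc)) where
  obj M := ModuleCat.of _ (CornerModule K v M hsrc)
  map f := ModuleCat.ofHom (restrictCorner hsrc f.hom)
  map_id _ := rfl
  map_comp _ _ := rfl

theorem cornerFunctor_faithful (hreg : E.IsRegular v) : (cornerFunctor K v hsrc).Faithful where
  map_injective h := ModuleCat.hom_ext
    (restrictCorner_injective hreg (congrArg ModuleCat.Hom.hom h))

theorem cornerFunctor_full : (cornerFunctor K v hsrc).Full where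
  map_surjective g := by
    obtain ⟨f, hf⟩ := restrictCorner_surjective (ModuleCat.Hom.hom g)
    exact ⟨ModuleCat.ofHom f, ModuleCat.hom_ext hf⟩

variable (N : ModuleCat.{0} (LeavittPathAlgebra K (E.sourceElim v hsrc)))

/-- The induced module as an object of the category of `L_K(E)`-modules. -/
def inducedObj : ModuleCat.{0} (LeavittPathAlgebra K E) :=
  ModuleCat.of _ (Induced K v hsrc N)

/-- The first projection from `(1 - v) M` to `N`, where `M` is induced from `N`. -/
def cornerFst : CornerModule K v (inducedObj K v hsrc N) hsrc →+ N where
  toFun m := (m.1 : Induced K v hsrc N).1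
  map_zero' := rfl
  map_add' _ _ := rfl

theorem cornerFst_apply (m : CornerModule K v (inducedObj K v hsrc N) hsrc) :
    cornerFst K v hsrc N m = (m.1 : Induced K v hsrc N).1 := rfl

theorem cornerFst_smul (a : LeavittPathAlgebra K (E.sourceElim v hsrc))
    (m : CornerModule K v (inducedObj K v hsrc N) hsrc) :
    cornerFst K v hsrc N (a • m) = a • cornerFst K v hsrc N m := by
  refine map_smul_of_generators (cornerFst K v hsrc N) ?_ ?_ ?_ ?_ a m
  · intro k m
    rw [cornerFst_apply, coe_algebraMap_smul]
    refine (congrArg Prod.fst (induced_algebraMap_smul K v hsrc k m.1)).trans ?_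
    exact (algebraMap_smul (LeavittPathAlgebra K (E.sourceElim v hsrc)) k _).symm
  · intro u m
    rw [cornerFst_apply, coe_vert_smul]
    refine (congrArg Prod.fst (induced_vert_smul K v hsrc u.1 m.1)).trans ?_
    exact congrArg (· • _) (elimVert_coe K v hsrc u)
  · intro e m
    rw [cornerFst_apply, coe_edge_smul]
    refine (congrArg Prod.fst (induced_edge_smul K v hsrc e.1 m.1)).trans ?_
    exact congrArg (· • _) (elimEdge_coe K v hsrc e)
  · intro e m
    rw [cornerFst_apply, coe_ghost_smul]
    refine (congrArg Prod.fst (induced_ghost_smul K v hsrc e.1 m.1)).trans ?_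
    have h0 : (m.1 : Induced K v hsrc N).2.1 e.1 = 0 :=
      ((m.1 : Induced K v hsrc N).2.2 e.1).2 e.2
    refine (congrArg (_ + ·) h0).trans ((add_zero _).trans ?_)
    exact congrArg (· • _) (elimGhost_coe K v hsrc e)

/-- `v` acts on the induced module as the projection to the second factor, so the kernel of `v` is
the first factor. -/
theorem cornerFst_bijective : Function.Bijective (cornerFst K v hsrc N) := by
  have hv (p : Induced K v hsrc N) : vert K E v • p = (0, p.2) := by
    rw [induced_vert_smul, elimVert_self, zero_smul, if_pos rfl]
  constructor
  · rw [injective_iff_map_eq_zero]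
    intro m hm
    have h2 : (m.1 : Induced K v hsrc N).2 = 0 :=
      congrArg Prod.snd ((hv m.1).symm.trans m.2)
    exact Subtype.ext (Prod.ext hm h2)
  · intro n
    exact ⟨⟨((n, 0) : Induced K v hsrc N), hv (n, 0)⟩, rfl⟩

theorem cornerFunctor_essSurj : (cornerFunctor K v hsrc).EssSurj where
  mem_essImage N := ⟨inducedObj K v hsrc N, ⟨LinearEquiv.toModuleIso
    (LinearEquiv.ofBijective
      ({ cornerFst K v hsrc N with map_smul' := cornerFst_smul K v hsrc N } :
        CornerModule K v (inducedObj K v hsrc N) hsrc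
          →ₗ[LeavittPathAlgebra K (E.sourceElim v hsrc)] N)
      (cornerFst_bijective K v hsrc N))⟩⟩

end Equivalence

end LeavittPathAlgebra

/-- Eliminating a non-isolated source preserves Morita equivalence of
Leavitt path algebras. -/
theorem sourceElim_moritaEquivalent (K : Type) [Field K] (E : FinGraph) (v : E.V)
    (hsrc : E.IsSource v) (hreg : E.IsRegular v) :
    MoritaEquivalent (LeavittPathAlgebra K E)
      (LeavittPathAlgebra K (E.sourceElim v hsrc)) := by
  have := LeavittPathAlgebra.cornerFunctor_faithful K v hsrc hreg
  have := LeavittPathAlgebra.cornerFunctor_full K v hsrc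
  have := LeavittPathAlgebra.cornerFunctor_essSurj K v hsrc
  have : (LeavittPathAlgebra.cornerFunctor K v hsrc).IsEquivalence := { }
  exact ⟨(LeavittPathAlgebra.cornerFunctor K v hsrc).asEquivalence⟩
end
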